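/- Let F be a centered real random variable with density f, unit variance, and Stein factor τ_F with E[|τ_F(F)|^{2+η}] < ∞ for some η > 0. Let Z ~ N(0,1) be independent of F, and suppose TV(√t F + √(1−t) x, F) ≤ κ(1+|x|) t^{-1}(1−t)^α for all x ∈ R, t ∈ (0,1], with κ, α > 0. Set Δ = E[(1 − τ_F(F))^2] and suppose Δ ≤ 1. Then D(F‖Z) ≤ ((η+1)/((1∧2α)η)) Δ |log Δ| + (C_η(η+1)/((1∧2α)η)) Δ, where C_η = 2(4κ+4)^{η/(η+1)} E[|Z|^{η+2}]^{1/(η+1)} (1 + E[|τ_F(F)|^{η+2}])^{1/(η+1)}. -/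

import Mathlib

open MeasureTheory ProbabilityTheory

/-- Total variation distance between two measures on `ℝ`. -/
noncomputable def tvDist (μ ν : MeasureTheory.Measure ℝ) : ℝ :=
  sSup {r : ℝ | ∃ s : Set ℝ, MeasurableSet s ∧ r = |(μ s).toReal - (ν s).toReal|}

/-!
Write `P x = ∫ y > x, y * f y`. Stein's identity says that `τ f = P` almost everywhere, so `τ ≥ 0`,
`E τ(F) = 1`, and with `φ` the Gaussian density
`D(F‖Z) = E log (P(F) / φ(F)) + E [τ(F) - 1 - log τ(F)]`.

The ratio `P / φ` has derivative `x (P - f) / φ = x (τ - 1) f / φ`; comparing with Mills' ratio and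
applying a weighted Hardy inequality, the first term is `O(Δ)`. In the second,
`t - 1 - log t ≤ (1/2 + log (1/v)) (1 - t) ^ 2 + log⁺ (v/t)` for every small `v`, and the total
variation hypothesis bounds the mass that the law of `F` gives to `{τ < s}` by a multiple of
`s ^ min 1 (2 * α)`, hence the last summand by a multiple of `v ^ min 1 (2 * α)`. The choice
`v ^ min 1 (2 * α) ≈ Δ` gives the logarithm. Since `f` is not assumed measurable or nonnegative, it
is compared with a measurable minorant `g` of the same law, at the cost of the Gaussian mass of
`{g = 0}`, which is again `O(Δ)`.
-/

open Set Filter Topology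
open scoped ENNReal NNReal

/-! ### Fubini over the triangle `c < y < t` -/

section Triangle

variable {c : ℝ}

theorem lintegral_Ioi_mul_lintegral_Ioi {a b : ℝ → ℝ≥0∞} (ha : Measurable a) (hb : Measurable b)
    (c : ℝ) :
    ∫⁻ y in Ioi c, a y * ∫⁻ t in Ioi y, b t = ∫⁻ t in Ioi c, b t * ∫⁻ y in Ioo c t, a y := by
  have hmeas : Measurable (Function.uncurry fun y t => (Ioi y).indicator (fun t => a y * b t) t) :=
    ((ha.comp measurable_fst).mul (hb.comp measurable_snd)).indicator
      (measurableSet_lt measurable_fst measurable_snd)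
  calc ∫⁻ y in Ioi c, a y * ∫⁻ t in Ioi y, b t
      = ∫⁻ y in Ioi c, ∫⁻ t in Ioi c, (Ioi y).indicator (fun t => a y * b t) t := by
        refine setLIntegral_congr_fun measurableSet_Ioi fun y (hy : c < y) => ?_
        rw [setLIntegral_indicator measurableSet_Ioi, Ioi_inter_Ioi, sup_eq_left.2 hy.le,
          lintegral_const_mul _ hb]
    _ = ∫⁻ t in Ioi c, ∫⁻ y in Ioi c, (Iio t).indicator (fun y => a y * b t) y :=
        lintegral_lintegral_swap hmeas.aemeasurable
    _ = ∫⁻ t in Ioi c, b t * ∫⁻ y in Ioo c t, a y := by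
        refine lintegral_congr fun t => ?_
        rw [setLIntegral_indicator measurableSet_Iio, Iio_inter_Ioi, lintegral_mul_const _ ha,
          mul_comm]

theorem integrable_triangle {a b : ℝ → ℝ} (ha : Measurable a) (hb : Measurable b)
    (hbi : Integrable b)
    (h : IntegrableOn (fun y => a y * ∫ t in Ioi y, |b t|) (Ioi c)) :
    Integrable (Function.uncurry fun y t => (Ioi y).indicator (fun t => a y * b t) t)
      ((volume.restrict (Ioi c)).prod (volume.restrict (Ioi c))) := by
  have hmeas : Measurable (Function.uncurry fun y t => (Ioi y).indicator (fun t => a y * b t) t) :=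
    ((ha.comp measurable_fst).mul (hb.comp measurable_snd)).indicator
      (measurableSet_lt measurable_fst measurable_snd)
  refine (integrable_prod_iff hmeas.aestronglyMeasurable).2 ⟨Eventually.of_forall fun y =>
    ((hbi.restrict.const_mul (a y)).indicator measurableSet_Ioi), ?_⟩
  refine h.norm.congr ((ae_restrict_iff' measurableSet_Ioi).2 (Eventually.of_forall fun y hy => ?_))
  have hy' : Ioi y ∩ Ioi c = Ioi y := inter_eq_left.2 (Ioi_subset_Ioi (le_of_lt hy))
  simp only [Function.uncurry, norm_indicator_eq_indicator_norm, norm_mul, Real.norm_eq_abs]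
  rw [setIntegral_indicator measurableSet_Ioi, inter_comm, hy', integral_const_mul,
    abs_of_nonneg (integral_nonneg fun t => abs_nonneg (b t))]

theorem integral_triangle_inner (a b : ℝ → ℝ) (t : ℝ) (ht : c < t) :
    ∫ y in Ioi c, (Ioi y).indicator (fun t => a y * b t) t = b t * ∫ y in c..t, a y := by
  have hflip : (fun y => (Ioi y).indicator (fun t => a y * b t) t) =
      (Iio t).indicator fun y => a y * b t := rfl
  rw [hflip, setIntegral_indicator measurableSet_Iio, Ioi_inter_Iio, integral_mul_const, mul_comm,
    intervalIntegral.integral_of_le ht.le, integral_Ioc_eq_integral_Ioo]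

variable {a b : ℝ → ℝ} (ha : Measurable a) (hb : Measurable b) (hbi : Integrable b)
  (h : IntegrableOn (fun y => a y * ∫ t in Ioi y, |b t|) (Ioi c))

include ha hb hbi h

theorem integrableOn_mul_primitive : IntegrableOn (fun t => b t * ∫ y in c..t, a y) (Ioi c) :=
  (integrable_triangle ha hb hbi h).integral_prod_right.congr
    ((ae_restrict_iff' measurableSet_Ioi).2
      (Eventually.of_forall fun t ht => integral_triangle_inner a b t ht))

theorem integral_Ioi_mul_integral_Ioi :
    ∫ y in Ioi c, a y * ∫ t in Ioi y, b t = ∫ t in Ioi c, b t * ∫ y in c..t, a y := by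
  calc ∫ y in Ioi c, a y * ∫ t in Ioi y, b t
      = ∫ y in Ioi c, ∫ t in Ioi c, (Ioi y).indicator (fun t => a y * b t) t := by
        refine setIntegral_congr_fun measurableSet_Ioi fun y (hy : c < y) => ?_
        rw [setIntegral_indicator measurableSet_Ioi, Ioi_inter_Ioi, sup_eq_right.2 hy.le,
          integral_const_mul]
    _ = ∫ t in Ioi c, ∫ y in Ioi c, (Ioi y).indicator (fun t => a y * b t) t :=
        integral_integral_swap (integrable_triangle ha hb hbi h)
    _ = ∫ t in Ioi c, b t * ∫ y in c..t, a y :=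
        setIntegral_congr_fun measurableSet_Ioi fun t ht => integral_triangle_inner a b t ht

end Triangle

/-! ### Tail integrals of a density -/

/-- The tail first moment `P(x) = ∫_{y > x} y g(y) dy` of a density `g`. When `g` is the density of
a centered variable, its Stein factor is `P / g`. -/
noncomputable def tailMean (g : ℝ → ℝ) (x : ℝ) : ℝ := ∫ y in Ioi x, y * g y

/-- The tail mass `G(x) = ∫_{y > x} g(y) dy` of a density `g`. -/
noncomputable def tailMass (g : ℝ → ℝ) (x : ℝ) : ℝ := ∫ y in Ioi x, g y

section Tails

variable {g : ℝ → ℝ}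

theorem integrable_id_mul_of_sq (gi : Integrable g) (g2 : Integrable fun x => x ^ 2 * g x) :
    Integrable fun x => x * g x := by
  refine (gi.norm.add g2.norm).mono' (measurable_id.aestronglyMeasurable.mul gi.1)
    (Eventually.of_forall fun x => ?_)
  have hx : |x| ≤ 1 + x ^ 2 := by nlinarith [sq_abs x, sq_nonneg (|x| - 1)]
  simp only [Pi.add_apply, norm_mul, norm_pow, Real.norm_eq_abs, sq_abs]
  nlinarith [abs_nonneg (g x)]

theorem tailMass_sub_tailMass (gi : Integrable g) (x y : ℝ) :
    tailMass g x - tailMass g y = ∫ t in x..y, g t :=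
  intervalIntegral.integral_Ioi_sub_Ioi' gi.integrableOn gi.integrableOn

theorem tailMean_sub_tailMean (g1 : Integrable fun x => x * g x) (x y : ℝ) :
    tailMean g x - tailMean g y = ∫ t in x..y, t * g t :=
  tailMass_sub_tailMass g1 x y

theorem continuous_tailMass (gi : Integrable g) : Continuous (tailMass g) := by
  have hG : tailMass g = fun y => tailMass g 0 - ∫ t in (0 : ℝ)..y, g t := by
    funext y; rw [← tailMass_sub_tailMass gi]; ring
  rw [hG]
  exact continuous_const.sub
    (intervalIntegral.continuous_primitive (fun _ _ => gi.intervalIntegrable) _)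

theorem continuous_tailMean (g1 : Integrable fun x => x * g x) : Continuous (tailMean g) :=
  continuous_tailMass g1

section Nonneg

variable (g0 : ∀ x, 0 ≤ g x)

include g0

theorem tailMass_nonneg (x : ℝ) : 0 ≤ tailMass g x :=
  setIntegral_nonneg measurableSet_Ioi fun y _ => g0 y

theorem tailMean_nonneg {x : ℝ} (hx : 0 ≤ x) : 0 ≤ tailMean g x :=
  setIntegral_nonneg measurableSet_Ioi fun y hy => mul_nonneg (hx.trans (le_of_lt hy)) (g0 y)

theorem tailMass_anti (gi : Integrable g) : Antitone (tailMass g) := fun x y hxy => by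
  have hint : 0 ≤ ∫ t in x..y, g t := intervalIntegral.integral_nonneg hxy fun t _ => g0 t
  linarith [tailMass_sub_tailMass gi x y]

theorem mul_tailMass_le_tailMean (gi : Integrable g) (g1 : Integrable fun x => x * g x) (x : ℝ) :
    x * tailMass g x ≤ tailMean g x := by
  rw [tailMass, tailMean, ← integral_const_mul]
  exact setIntegral_mono_on (gi.const_mul x).integrableOn g1.integrableOn measurableSet_Ioi
    fun y hy => mul_le_mul_of_nonneg_right (le_of_lt hy) (g0 y)

variable (g1 : Integrable fun x => x * g x)

include g1

theorem tailMean_anti {x y : ℝ} (hx : 0 ≤ x) (hxy : x ≤ y) : tailMean g y ≤ tailMean g x := by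
  have hint : 0 ≤ ∫ t in x..y, t * g t :=
    intervalIntegral.integral_nonneg hxy fun t ht => mul_nonneg (hx.trans ht.1) (g0 t)
  linarith [tailMean_sub_tailMean g1 x y]

/-- The mean `P/G` of `g` conditioned on `(a, ∞)` increases with `a`. -/
theorem tailMean_zero_mul_tailMass_le (gi : Integrable g) {a : ℝ} (ha : 0 ≤ a) :
    tailMean g 0 * tailMass g a ≤ tailMean g a * tailMass g 0 := by
  have hmass := tailMass_sub_tailMass gi 0 a
  have hincr : ∫ t in (0 : ℝ)..a, t * g t ≤ a * ∫ t in (0 : ℝ)..a, g t := by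
    rw [← intervalIntegral.integral_const_mul]
    exact intervalIntegral.integral_mono_on ha g1.intervalIntegrable
      (gi.const_mul a).intervalIntegrable fun t ht => mul_le_mul_of_nonneg_right ht.2 (g0 t)
  have hmean : tailMean g 0 ≤ tailMean g a + a * (tailMass g 0 - tailMass g a) := by
    rw [hmass]; linarith [tailMean_sub_tailMean g1 0 a]
  have hGa := tailMass_nonneg g0 a
  have hdiff : 0 ≤ tailMass g 0 - tailMass g a := sub_nonneg.2 (tailMass_anti g0 gi ha)
  have hxG := mul_tailMass_le_tailMean g0 gi g1 a
  nlinarith [mul_le_mul_of_nonneg_right hmean hGa, mul_le_mul_of_nonneg_right hxG hdiff]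

theorem ae_eq_zero_of_tailMean_eq_zero {x : ℝ} (hx : 0 ≤ x) (hP : tailMean g x = 0) :
    ∀ᵐ y, x < y → g y = 0 := by
  have hnn : 0 ≤ᵐ[volume.restrict (Ioi x)] fun y => y * g y :=
    (ae_restrict_iff' measurableSet_Ioi).2 (Eventually.of_forall fun y hy =>
      mul_nonneg (hx.trans (le_of_lt hy)) (g0 y))
  have hzero := (setIntegral_eq_zero_iff_of_nonneg_ae hnn g1.integrableOn).1 hP
  filter_upwards [(ae_restrict_iff' measurableSet_Ioi).1 hzero] with y hy hxy
  exact (mul_eq_zero.1 (hy hxy)).resolve_left (hx.trans_lt hxy).ne'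

omit g0 in
theorem tailMean_pos_or_exists_endpoint (hP : ∀ x, 0 ≤ x → 0 ≤ tailMean g x) :
    (∀ x, 0 ≤ x → 0 < tailMean g x) ∨
      ∃ b, 0 ≤ b ∧ tailMean g b = 0 ∧ ∀ x, 0 ≤ x → x < b → 0 < tailMean g x := by
  refine or_iff_not_imp_left.2 fun hne => ?_
  push Not at hne
  obtain ⟨b₀, hb₀, hPb₀⟩ := hne
  set S := {b | 0 ≤ b ∧ tailMean g b = 0}
  have hbdd : BddBelow S := ⟨0, fun b hb => hb.1⟩
  have hclosed : IsClosed S := (isClosed_le continuous_const continuous_id).inter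
    (isClosed_eq (continuous_tailMean g1) continuous_const)
  obtain ⟨hb, hPb⟩ := hclosed.csInf_mem ⟨b₀, hb₀, hPb₀.antisymm (hP b₀ hb₀)⟩ hbdd
  refine ⟨sInf S, hb, hPb, fun x hx hxb => (hP x hx).lt_of_ne' fun hPx => ?_⟩
  exact (csInf_le hbdd ⟨hx, hPx⟩).not_gt hxb

theorem ae_tailMean_pos : ∀ᵐ x, 0 < x → g x ≠ 0 → 0 < tailMean g x := by
  rcases tailMean_pos_or_exists_endpoint g1 fun x => tailMean_nonneg g0 with
    hpos | ⟨b, hb, hPb, hpos⟩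
  · exact Eventually.of_forall fun x hx _ => hpos x hx.le
  · filter_upwards [ae_eq_zero_of_tailMean_eq_zero g0 g1 hb hPb, Measure.ae_ne volume b]
      with x hzero hne hx hgx
    refine hpos x hx.le (lt_of_not_ge fun hbx => hgx (hzero (hbx.lt_of_ne' hne)))

/-- Monotone exhaustion of `{y > c | 0 < P y}` by the intervals `(c, d]` with `0 < P d`. -/
theorem setLIntegral_Ioi_le_of_forall_Ioc {H : ℝ → ℝ≥0∞} {B : ℝ≥0∞} {c : ℝ} (hc : 0 ≤ c)
    (hzero : ∀ᵐ y, c < y → tailMean g y = 0 → H y = 0)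
    (hbound : ∀ d, c < d → 0 < tailMean g d → ∫⁻ y in Ioc c d, H y ≤ B) :
    ∫⁻ y in Ioi c, H y ≤ B := by
  have hcont := continuous_tailMean g1
  let S : {q : ℚ // c < q ∧ 0 < tailMean g q} → Set ℝ := fun q => Ioc c q
  have hS : Ioi c ∩ {y | 0 < tailMean g y} = ⋃ q, S q := by
    ext y
    simp only [mem_inter_iff, mem_Ioi, mem_ofPred_eq, mem_iUnion]
    constructor
    · rintro ⟨hcy, hy⟩
      have hev : ∀ᶠ z in 𝓝[>] y, 0 < tailMean g z :=
        ((hcont.tendsto y).eventually (lt_mem_nhds hy)).filter_mono nhdsWithin_le_nhds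
      obtain ⟨z, hyz, hz⟩ := mem_nhdsGT_iff_exists_Ioo_subset.1 hev
      obtain ⟨q, hyq, hqz⟩ := exists_rat_btwn (mem_Ioi.1 hyz)
      exact ⟨⟨q, hcy.trans hyq, hz ⟨hyq, hqz⟩⟩, hcy, hyq.le⟩
    · rintro ⟨⟨q, _, hq⟩, hcy, hyq⟩
      exact ⟨hcy, hq.trans_le (tailMean_anti g0 g1 (hc.trans hcy.le) hyq)⟩
  have hdir : Directed (· ⊆ ·) S :=
    Monotone.directed_le fun p q hpq => Ioc_subset_Ioc_right (Rat.cast_le.2 hpq)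
  have hrestrict : ∫⁻ y in Ioi c, H y = ∫⁻ y in Ioi c ∩ {y | 0 < tailMean g y}, H y := by
    rw [inter_comm, ← setLIntegral_indicator (isOpen_lt continuous_const hcont).measurableSet]
    refine setLIntegral_congr_fun_ae measurableSet_Ioi ?_
    filter_upwards [hzero] with y hy hcy
    by_cases hPy : 0 < tailMean g y
    · rw [indicator_of_mem (show y ∈ {y | 0 < tailMean g y} from hPy)]
    · rw [indicator_of_notMem (show y ∉ {y | 0 < tailMean g y} from hPy)]
      exact hy hcy ((not_lt.1 hPy).antisymm (tailMean_nonneg g0 (hc.trans (le_of_lt hcy))))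
  rw [hrestrict, hS, setLIntegral_iUnion_of_directed _ hdir]
  exact iSup_le fun q => hbound q q.2.1 q.2.2

end Nonneg

end Tails

/-! ### The chain rule along the tail mean -/

theorem absolutelyContinuousOnInterval_comp_of_lipschitzOnWith {u p : ℝ → ℝ} {a b : ℝ} {s : Set ℝ}
    {K : ℝ≥0} (hu : LipschitzOnWith K u s) (hp : AbsolutelyContinuousOnInterval p a b)
    (hmaps : MapsTo p (uIcc a b) s) : AbsolutelyContinuousOnInterval (fun x => u (p x)) a b := by
  rw [absolutelyContinuousOnInterval_iff] at hp ⊢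
  intro ε hε
  have hK : (0 : ℝ) < K + 1 := by positivity
  obtain ⟨δ, hδ, h⟩ := hp (ε / (K + 1)) (by positivity)
  refine ⟨δ, hδ, fun E hE hlength => ?_⟩
  calc ∑ i ∈ Finset.range E.1, dist (u (p (E.2 i).1)) (u (p (E.2 i).2))
      ≤ ∑ i ∈ Finset.range E.1, (K + 1) * dist (p (E.2 i).1) (p (E.2 i).2) := by
        refine Finset.sum_le_sum fun i hi =>
          (hu.dist_le_mul _ (hmaps (hE.1 i hi).1) _ (hmaps (hE.1 i hi).2)).trans ?_
        gcongr
        linarith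
    _ = (K + 1) * ∑ i ∈ Finset.range E.1, dist (p (E.2 i).1) (p (E.2 i).2) := by
        rw [Finset.mul_sum]
    _ < ε := by
        have hsum := h E hE hlength
        rwa [lt_div_iff₀' hK] at hsum

theorem exists_lipschitzOnWith_Icc_of_hasDerivAt {u u' : ℝ → ℝ} {a b : ℝ}
    (hu : ∀ s ∈ Icc a b, HasDerivAt u (u' s) s) (hcont : ContinuousOn u' (Icc a b)) :
    ∃ K : ℝ≥0, LipschitzOnWith K u (Icc a b) := by
  obtain ⟨C, hC⟩ := isCompact_Icc.exists_bound_of_continuousOn hcont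
  refine ⟨C.toNNReal, (convex_Icc a b).lipschitzOnWith_of_nnnorm_hasDerivWithin_le
    (fun s hs => (hu s hs).hasDerivWithinAt) fun s hs => ?_⟩
  exact NNReal.coe_le_coe.1 ((hC s hs).trans (Real.le_coe_toNNReal C))

section ChainRule

variable {g : ℝ → ℝ}

theorem absolutelyContinuousOnInterval_tailMean (g1 : Integrable fun x => x * g x) (c d : ℝ) :
    AbsolutelyContinuousOnInterval (tailMean g) c d := by
  have hP : tailMean g = (fun _ => tailMean g c) - fun x => ∫ t in c..x, t * g t := by
    funext x
    rw [Pi.sub_apply, ← tailMean_sub_tailMean g1, sub_sub_cancel]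
  rw [hP]
  exact contDiffOn_const.absolutelyContinuousOnInterval.sub
    (g1.intervalIntegrable.absolutelyContinuousOnInterval_intervalIntegral left_mem_uIcc)

theorem ae_hasDerivAt_tailMean (g1 : Integrable fun x => x * g x) :
    ∀ᵐ x, HasDerivAt (tailMean g) (-(x * g x)) x := by
  have hP : tailMean g = fun x => tailMean g 0 - ∫ t in (0 : ℝ)..x, t * g t := by
    funext x
    rw [← tailMean_sub_tailMean g1, sub_sub_cancel]
  filter_upwards [LocallyIntegrable.ae_hasDerivAt_integral g1.locallyIntegrable] with x hx
  rw [hP]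
  exact (hx 0).const_sub _

variable (g0 : ∀ x, 0 ≤ g x) (g1 : Integrable fun x => x * g x) {u u' : ℝ → ℝ}
  (hu : ∀ s, 0 < s → HasDerivAt u (u' s) s) (hu' : ContinuousOn u' (Ioi 0)) {c d : ℝ}
  (hc : 0 ≤ c) (hcd : c ≤ d) (hd : 0 < tailMean g d)

include g0 g1 hu hu' hc hcd hd

theorem intervalIntegral_deriv_tailMean :
    IntervalIntegrable (fun y => u' (tailMean g y) * (y * g y)) volume c d ∧
      ∫ y in c..d, u' (tailMean g y) * (y * g y) = u (tailMean g c) - u (tailMean g d) := by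
  have hpos : Icc (tailMean g d) (tailMean g c) ⊆ Ioi 0 := fun s hs => hd.trans_le hs.1
  have hmaps : MapsTo (tailMean g) (uIcc c d) (Icc (tailMean g d) (tailMean g c)) := fun x hx => by
    rw [uIcc_of_le hcd] at hx
    exact ⟨tailMean_anti g0 g1 (hc.trans hx.1) hx.2, tailMean_anti g0 g1 hc hx.1⟩
  obtain ⟨K, hK⟩ := exists_lipschitzOnWith_Icc_of_hasDerivAt
    (fun s hs => hu s (hpos hs)) (hu'.mono hpos)
  have hac := absolutelyContinuousOnInterval_comp_of_lipschitzOnWith hK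
    (absolutelyContinuousOnInterval_tailMean g1 c d) hmaps
  have hderiv : ∀ᵐ x, x ∈ uIoc c d →
      deriv (fun x => u (tailMean g x)) x = -(u' (tailMean g x) * (x * g x)) := by
    filter_upwards [ae_hasDerivAt_tailMean g1] with x hx hmem
    rw [← mul_neg]
    exact ((hu _ (hpos (hmaps (uIoc_subset_uIcc hmem)))).comp x hx).deriv
  have hftc := hac.integral_deriv_eq_sub
  rw [intervalIntegral.integral_congr_ae hderiv, intervalIntegral.integral_neg] at hftc
  refine ⟨hac.intervalIntegrable_deriv.neg.congr_ae ?_, by linarith⟩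
  refine (ae_restrict_iff' measurableSet_uIoc).2 ?_
  filter_upwards [hderiv] with x hx hmem
  rw [Pi.neg_apply, hx hmem, neg_neg]

theorem lintegral_Ioc_deriv_tailMean (hpos : ∀ s, 0 < s → 0 ≤ u' s) :
    ∫⁻ y in Ioc c d, ENNReal.ofReal (u' (tailMean g y) * (y * g y)) =
      ENNReal.ofReal (u (tailMean g c) - u (tailMean g d)) := by
  obtain ⟨hint, heq⟩ := intervalIntegral_deriv_tailMean g0 g1 hu hu' hc hcd hd
  rw [← heq, intervalIntegral.integral_of_le hcd, ofReal_integral_eq_lintegral_ofReal]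
  · exact (intervalIntegrable_iff_integrableOn_Ioc_of_le hcd).1 hint
  · refine (ae_restrict_iff' measurableSet_Ioc).2 (Eventually.of_forall fun y hy => ?_)
    have hy0 : 0 ≤ y := hc.trans hy.1.le
    exact mul_nonneg (hpos _ (hd.trans_le (tailMean_anti g0 g1 hy0 hy.2))) (mul_nonneg hy0 (g0 y))

end ChainRule

/-! ### A Hardy inequality with weight `y g / P` -/

section Hardy

variable {g : ℝ → ℝ}

theorem lintegral_Ioi_inv_sqrt_tailMean_le (g0 : ∀ x, 0 ≤ g x) (g1 : Integrable fun x => x * g x)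
    {c : ℝ} (hc : 0 ≤ c) :
    ∫⁻ y in Ioi c, ENNReal.ofReal ((√(tailMean g y))⁻¹ * (y * g y)) ≤
      ENNReal.ofReal (2 * √(tailMean g c)) := by
  refine setLIntegral_Ioi_le_of_forall_Ioc g0 g1 hc
    (Eventually.of_forall fun y _ hy => by simp [hy]) fun d hcd hd => ?_
  have hderiv : ∀ s : ℝ, 0 < s → HasDerivAt (fun s => 2 * √s) (√s)⁻¹ s := fun s hs =>
    ((Real.hasDerivAt_sqrt hs.ne').const_mul 2).congr_deriv (by field_simp)
  have hcont : ContinuousOn (fun s : ℝ => (√s)⁻¹) (Ioi 0) :=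
    Real.continuous_sqrt.continuousOn.inv₀ fun s hs => (Real.sqrt_pos.2 hs).ne'
  rw [lintegral_Ioc_deriv_tailMean g0 g1 hderiv hcont hc hcd.le hd fun s _ => by positivity]
  exact ENNReal.ofReal_le_ofReal (by linarith [Real.sqrt_nonneg (tailMean g d)])

theorem lintegral_Ioc_inv_tailMean_sqrt_le (g0 : ∀ x, 0 ≤ g x)
    (g1 : Integrable fun x => x * g x) {d : ℝ} (hd : 0 ≤ d) (hP : 0 < tailMean g d) :
    ∫⁻ y in Ioc 0 d, ENNReal.ofReal ((2 * (tailMean g y * √(tailMean g y)))⁻¹ * (y * g y)) ≤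
      ENNReal.ofReal (√(tailMean g d))⁻¹ := by
  have hderiv : ∀ s : ℝ, 0 < s → HasDerivAt (fun s => -(√s)⁻¹) (2 * (s * √s))⁻¹ s := fun s hs => by
    refine ((Real.hasDerivAt_sqrt hs.ne').inv (Real.sqrt_pos.2 hs).ne').neg.congr_deriv ?_
    rw [Real.sq_sqrt hs.le]
    field_simp
  have hcont : ContinuousOn (fun s : ℝ => (2 * (s * √s))⁻¹) (Ioi 0) :=
    (by fun_prop : Continuous fun s : ℝ => 2 * (s * √s)).continuousOn.inv₀ fun s (hs : 0 < s) =>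
      by positivity
  rw [lintegral_Ioc_deriv_tailMean g0 g1 hderiv hcont le_rfl hd hP fun s hs => by positivity]
  refine ENNReal.ofReal_le_ofReal ?_
  have hnn : 0 ≤ (√(tailMean g 0))⁻¹ := by positivity
  linarith

/-- Young's inequality with the Schur weights `p ^ (1/2)`, `q ^ (1/2)`. -/
theorem mul_le_schur_weights {y t a b e f p q : ℝ} (hy : 0 < y) (hyt : y < t) (ha : 0 ≤ a)
    (hb : 0 ≤ b) (hp : 0 < p) (hq : 0 < q) :
    (y * a / p * e) * (f * b) ≤ (e ^ 2 * a / (2 * √p)) * ((√q)⁻¹ * (t * b)) +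
      ((2 * (p * √p))⁻¹ * (y * a)) * (f ^ 2 * b * √q) := by
  obtain ⟨r, hr, rfl⟩ : ∃ r, 0 < r ∧ r ^ 2 = p := ⟨√p, by positivity, Real.sq_sqrt hp.le⟩
  obtain ⟨s, hs, rfl⟩ : ∃ s, 0 < s ∧ s ^ 2 = q := ⟨√q, by positivity, Real.sq_sqrt hq.le⟩
  rw [Real.sqrt_sq hr.le, Real.sqrt_sq hs.le]
  have hsq : (e ^ 2 * a / (2 * r)) * (s⁻¹ * (y * b)) + ((2 * (r ^ 2 * r))⁻¹ * (y * a)) *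
      (f ^ 2 * b * s) - (y * a / r ^ 2 * e) * (f * b) =
      y * a * b / (2 * r ^ 3 * s) * (r * e - s * f) ^ 2 := by
    field_simp
    ring
  have hnn : 0 ≤ y * a * b / (2 * r ^ 3 * s) * (r * e - s * f) ^ 2 := by positivity
  have hmono : (e ^ 2 * a / (2 * r)) * (s⁻¹ * (y * b)) ≤
      (e ^ 2 * a / (2 * r)) * (s⁻¹ * (t * b)) := by gcongr
  linarith

variable (gm : Measurable g) (g0 : ∀ x, 0 ≤ g x) (g1 : Integrable fun x => x * g x) {e : ℝ → ℝ}
  (em : Measurable e)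

include g0 g1

theorem lintegral_schur_outer_le :
    ∫⁻ y in Ioi 0, ENNReal.ofReal (e y ^ 2 * g y / (2 * √(tailMean g y))) *
        ∫⁻ t in Ioi y, ENNReal.ofReal ((√(tailMean g t))⁻¹ * (t * g t)) ≤
      ∫⁻ y in Ioi 0, ENNReal.ofReal (e y ^ 2 * g y) := by
  refine setLIntegral_mono' measurableSet_Ioi fun y (hy : 0 < y) => ?_
  have hgy := g0 y
  refine (mul_le_mul_right (lintegral_Ioi_inv_sqrt_tailMean_le g0 g1 hy.le) _).trans ?_
  rw [← ENNReal.ofReal_mul (by positivity)]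
  refine ENNReal.ofReal_le_ofReal ?_
  rcases (Real.sqrt_nonneg (tailMean g y)).eq_or_lt with hp | hp
  · rw [← hp]; simp only [mul_zero, div_zero]; positivity
  · exact (div_mul_cancel₀ _ (by positivity)).le

include gm em

theorem lintegral_schur_inner_le :
    ∫⁻ y in Ioi 0, ENNReal.ofReal ((2 * (tailMean g y * √(tailMean g y)))⁻¹ * (y * g y)) *
        ∫⁻ t in Ioi y, ENNReal.ofReal (e t ^ 2 * g t * √(tailMean g t)) ≤
      ∫⁻ y in Ioi 0, ENNReal.ofReal (e y ^ 2 * g y) := by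
  have Pm := (continuous_tailMean g1).measurable
  rw [lintegral_Ioi_mul_lintegral_Ioi (by fun_prop) (by fun_prop)]
  refine setLIntegral_mono' measurableSet_Ioi fun t (ht : 0 < t) => ?_
  rcases (tailMean_nonneg g0 ht.le).eq_or_lt with hp | hp
  · simp [← hp]
  have hgt := g0 t
  refine (mul_le_mul_right ((lintegral_mono_set Ioo_subset_Ioc_self).trans
    (lintegral_Ioc_inv_tailMean_sqrt_le g0 g1 ht.le hp)) _).trans ?_
  rw [← ENNReal.ofReal_mul (by positivity), mul_inv_cancel_right₀ (Real.sqrt_pos.2 hp).ne']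

/-- Schur test with weight `√P`: since `P' = -y g`, both weighted kernels integrate exactly. -/
theorem lintegral_hardy_tailMean_le (e0 : ∀ y, 0 ≤ e y) :
    ∫⁻ y in Ioi 0, ENNReal.ofReal (y * g y / tailMean g y * e y) *
        ∫⁻ t in Ioi y, ENNReal.ofReal (e t * g t) ≤
      2 * ∫⁻ y in Ioi 0, ENNReal.ofReal (e y ^ 2 * g y) := by
  have Pm := (continuous_tailMean g1).measurable
  have hpt : ∀ y ∈ Ioi (0 : ℝ), ENNReal.ofReal (y * g y / tailMean g y * e y) *
        ∫⁻ t in Ioi y, ENNReal.ofReal (e t * g t) ≤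
      ENNReal.ofReal (e y ^ 2 * g y / (2 * √(tailMean g y))) *
          (∫⁻ t in Ioi y, ENNReal.ofReal ((√(tailMean g t))⁻¹ * (t * g t))) +
        ENNReal.ofReal ((2 * (tailMean g y * √(tailMean g y)))⁻¹ * (y * g y)) *
          ∫⁻ t in Ioi y, ENNReal.ofReal (e t ^ 2 * g t * √(tailMean g t)) := by
    intro y (hy : 0 < y)
    rcases (tailMean_nonneg g0 hy.le).eq_or_lt with hp | hp
    · simp [← hp]
    rw [← lintegral_const_mul _ (by fun_prop), ← lintegral_const_mul _ (by fun_prop),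
      ← lintegral_const_mul _ (by fun_prop), ← lintegral_add_left (by fun_prop)]
    refine lintegral_mono_ae ((ae_restrict_iff' measurableSet_Ioi).2 ?_)
    filter_upwards [ae_tailMean_pos g0 g1] with t hPt (hyt : y < t)
    by_cases hgt0 : g t = 0
    · simp [hgt0]
    have ht := hy.trans hyt
    have hgy := g0 y
    have hgt := g0 t
    have hey := e0 y
    rw [← ENNReal.ofReal_mul (by positivity), ← ENNReal.ofReal_mul (by positivity),
      ← ENNReal.ofReal_mul (by positivity), ← ENNReal.ofReal_add (by positivity) (by positivity)]
    exact ENNReal.ofReal_le_ofReal (mul_le_schur_weights hy hyt hgy hgt hp (hPt ht hgt0))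
  have hinner : ∀ b : ℝ → ℝ≥0∞, Measurable fun y => ∫⁻ t in Ioi y, b t := fun b =>
    Antitone.measurable fun x y hxy => lintegral_mono_set (Ioi_subset_Ioi hxy)
  refine (setLIntegral_mono' measurableSet_Ioi hpt).trans ?_
  rw [lintegral_add_left (Measurable.fun_mul (by fun_prop) (hinner _)), two_mul]
  exact add_le_add (lintegral_schur_outer_le g0 g1) (lintegral_schur_inner_le gm g0 g1 em)

end Hardy

/-! ### The Mills ratio of the standard Gaussian -/

local notation "φ" => gaussianPDFReal 0 1

section Mills

theorem gaussianPDFReal_zero_one (x : ℝ) :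
    φ x = (√(2 * Real.pi))⁻¹ * Real.exp (-(1 / 2) * x ^ 2) := by
  simp only [gaussianPDFReal, NNReal.coe_one, mul_one, sub_zero]
  ring_nf

theorem gaussianPDFReal_zero_one_pos (x : ℝ) : 0 < φ x :=
  gaussianPDFReal_pos 0 1 x one_ne_zero

theorem hasDerivAt_gaussianPDFReal_zero_one (x : ℝ) : HasDerivAt φ (-(x * φ x)) x := by
  have hpow : HasDerivAt (fun x : ℝ => -(1 / 2) * x ^ 2) (-x) x :=
    ((hasDerivAt_pow 2 x).const_mul (-(1 / 2))).congr_deriv (by push_cast; ring)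
  have hφ : φ = fun x => (√(2 * Real.pi))⁻¹ * Real.exp (-(1 / 2) * x ^ 2) :=
    funext gaussianPDFReal_zero_one
  rw [hφ]
  exact (hpow.exp.const_mul _).congr_deriv (by ring)

theorem continuous_gaussianPDFReal_zero_one : Continuous φ :=
  continuous_iff_continuousAt.2 fun x => (hasDerivAt_gaussianPDFReal_zero_one x).continuousAt

theorem integrable_id_mul_gaussianPDFReal : Integrable fun x : ℝ => x * φ x := by
  refine ((integrable_mul_exp_neg_mul_sq (b := 1 / 2) (by norm_num)).const_mul
    (√(2 * Real.pi))⁻¹).congr (Eventually.of_forall fun x => ?_)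
  simp only [gaussianPDFReal_zero_one]
  ring

theorem tailMean_gaussianPDFReal (y : ℝ) : tailMean φ y = φ y := by
  have htop : Tendsto φ atTop (𝓝 0) := by
    have hexp : Tendsto (fun x : ℝ => Real.exp (-(1 / 2) * x ^ 2)) atTop (𝓝 0) :=
      Real.tendsto_exp_atBot.comp
        ((tendsto_pow_atTop two_ne_zero).const_mul_atTop_of_neg (by norm_num))
    simpa only [← gaussianPDFReal_zero_one, mul_zero] using hexp.const_mul (√(2 * Real.pi))⁻¹
  have h := integral_Ioi_of_hasDerivAt_of_tendsto' (a := y)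
    (fun x _ => hasDerivAt_gaussianPDFReal_zero_one x)
    integrable_id_mul_gaussianPDFReal.neg.integrableOn htop
  rw [integral_neg, zero_sub] at h
  exact neg_injective h

/-- The Mills ratio `R(y) = (∫_{t > y} φ(t) dt) / φ(y)` of the standard Gaussian density `φ`. -/
noncomputable def millsRatio (y : ℝ) : ℝ := tailMass φ y / φ y

theorem millsRatio_nonneg (y : ℝ) : 0 ≤ millsRatio y :=
  div_nonneg (tailMass_nonneg (gaussianPDFReal_nonneg 0 1) y) (gaussianPDFReal_nonneg 0 1 y)

theorem mul_millsRatio_le_one (y : ℝ) : y * millsRatio y ≤ 1 := by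
  rw [millsRatio, ← mul_div_assoc, div_le_one (gaussianPDFReal_zero_one_pos y)]
  exact (mul_tailMass_le_tailMean (gaussianPDFReal_nonneg 0 1) (integrable_gaussianPDFReal 0 1)
    integrable_id_mul_gaussianPDFReal y).trans_eq (tailMean_gaussianPDFReal y)

theorem hasDerivAt_tailMass {g : ℝ → ℝ} (gi : Integrable g) (gc : Continuous g) (y : ℝ) :
    HasDerivAt (tailMass g) (-g y) y := by
  have hprim := (intervalIntegral.integral_hasDerivAt_right (a := 0) (b := y)
    gi.intervalIntegrable (gc.stronglyMeasurableAtFilter _ _) gc.continuousAt).const_sub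
    (tailMass g 0)
  refine hprim.congr_of_eventuallyEq (Eventually.of_forall fun z => ?_)
  simp only [← tailMass_sub_tailMass gi, sub_sub_cancel]

theorem hasDerivAt_millsRatio (y : ℝ) : HasDerivAt millsRatio (y * millsRatio y - 1) y := by
  have hφ := (gaussianPDFReal_zero_one_pos y).ne'
  refine ((hasDerivAt_tailMass (integrable_gaussianPDFReal 0 1)
    continuous_gaussianPDFReal_zero_one y).div (hasDerivAt_gaussianPDFReal_zero_one y)
    hφ).congr_deriv ?_
  rw [millsRatio]
  field_simp
  ring

theorem continuous_millsRatio : Continuous millsRatio :=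
  continuous_iff_continuousAt.2 fun y => (hasDerivAt_millsRatio y).continuousAt

theorem millsRatio_zero : millsRatio 0 = √(2 * Real.pi) / 2 := by
  have hpi : √(2 * Real.pi) ≠ 0 := by positivity
  have hmass : tailMass φ 0 = 1 / 2 := by
    simp only [tailMass, gaussianPDFReal_zero_one]
    rw [integral_const_mul, integral_gaussian_Ioi, show Real.pi / (1 / 2) = 2 * Real.pi by ring]
    field_simp
  rw [millsRatio, hmass, gaussianPDFReal_zero_one]
  simp only [ne_eq, OfNat.ofNat_ne_zero, not_false_eq_true, zero_pow, mul_zero, Real.exp_zero,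
    mul_one, div_inv_eq_mul]
  ring

theorem intervalIntegral_one_sub_mul_millsRatio (c t : ℝ) :
    ∫ y in c..t, (1 - y * millsRatio y) = millsRatio c - millsRatio t := by
  have hcont := continuous_millsRatio
  rw [intervalIntegral.integral_eq_sub_of_hasDerivAt (f := fun y => -millsRatio y)
    (fun y _ => (hasDerivAt_millsRatio y).neg.congr_deriv (by ring))
    (Continuous.intervalIntegrable (by fun_prop) _ _)]
  ring

theorem intervalIntegral_mul_millsRatio (c t : ℝ) :
    ∫ y in c..t, y * millsRatio y = (t - c) - (millsRatio c - millsRatio t) := by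
  have hcont := continuous_millsRatio
  rw [← intervalIntegral_one_sub_mul_millsRatio, intervalIntegral.integral_sub (by simp)
    (Continuous.intervalIntegrable (by fun_prop) _ _), intervalIntegral.integral_const]
  simp

theorem abs_mul_millsRatio_le_one {y : ℝ} (hy : 0 ≤ y) : |y * millsRatio y| ≤ 1 := by
  rw [abs_of_nonneg (mul_nonneg hy (millsRatio_nonneg y))]
  exact mul_millsRatio_le_one y

theorem abs_one_sub_mul_millsRatio_le_one {y : ℝ} (hy : 0 ≤ y) : |1 - y * millsRatio y| ≤ 1 := by
  have h0 := mul_nonneg hy (millsRatio_nonneg y)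
  rw [abs_of_nonneg (sub_nonneg.2 (mul_millsRatio_le_one y))]
  linarith

end Mills

section MillsTail

variable {g : ℝ → ℝ} (gm : Measurable g)

theorem integrableOn_mul_millsRatio_mul (gi : Integrable g) {c : ℝ} (hc : 0 ≤ c) :
    IntegrableOn (fun y => y * millsRatio y * g y) (Ioi c) := by
  refine gi.integrableOn.bdd_mul (c := 1)
    (continuous_id.mul continuous_millsRatio).aestronglyMeasurable
    ((ae_restrict_iff' measurableSet_Ioi).2 (Eventually.of_forall fun y hy => ?_))
  exact abs_mul_millsRatio_le_one (hc.trans (le_of_lt hy))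

variable (g0 : ∀ x, 0 ≤ g x) (g1 : Integrable fun x => x * g x)
  (hP : IntegrableOn (tailMean g) (Ioi 0))

include gm g0 g1 hP

theorem integral_Ioi_mul_tailMean {a : ℝ → ℝ} (ha : Continuous a) (hb : ∀ x, 0 ≤ x → |a x| ≤ 1)
    {c : ℝ} (hc : 0 ≤ c) :
    IntegrableOn (fun y => a y * tailMean g y) (Ioi c) ∧
      ∫ y in Ioi c, a y * tailMean g y = ∫ t in Ioi c, t * g t * ∫ y in c..t, a y := by
  have hint : IntegrableOn (fun y => a y * tailMean g y) (Ioi c) :=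
    (hP.mono_set (Ioi_subset_Ioi hc)).bdd_mul (c := 1) ha.aestronglyMeasurable
      ((ae_restrict_iff' measurableSet_Ioi).2
        (Eventually.of_forall fun y hy => hb y (hc.trans (le_of_lt hy))))
  refine ⟨hint, integral_Ioi_mul_integral_Ioi ha.measurable (by fun_prop) g1
    (hint.congr_fun (fun y hy => ?_) measurableSet_Ioi)⟩
  refine congrArg (a y * ·) (setIntegral_congr_fun measurableSet_Ioi fun t ht => ?_)
  exact (abs_of_nonneg (mul_nonneg ((hc.trans (le_of_lt hy)).trans (le_of_lt ht)) (g0 t))).symm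

theorem integral_one_sub_mul_millsRatio_mul_sub_tailMean (gi : Integrable g) {y : ℝ}
    (hy : 0 ≤ y) :
    ∫ s in Ioi y, (1 - s * millsRatio s) * (g s - tailMean g s) =
      tailMass g y - tailMean g y * millsRatio y := by
  have hRc := continuous_millsRatio
  obtain ⟨hPi, hFubini⟩ := integral_Ioi_mul_tailMean gm g0 g1 hP
    (a := fun s => 1 - s * millsRatio s) (by fun_prop)
    (fun x hx => abs_one_sub_mul_millsRatio_le_one hx) hy
  have hgR := integrableOn_mul_millsRatio_mul gi hy
  have hg := gi.integrableOn (s := Ioi y)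
  calc ∫ s in Ioi y, (1 - s * millsRatio s) * (g s - tailMean g s)
      = ∫ s in Ioi y, ((g s - s * millsRatio s * g s) - (1 - s * millsRatio s) * tailMean g s) := by
        congr 1; funext s; ring
    _ = ((∫ s in Ioi y, g s) - ∫ s in Ioi y, s * millsRatio s * g s) -
          ∫ t in Ioi y, (millsRatio y * (t * g t) - t * millsRatio t * g t) := by
        rw [integral_sub (hg.sub' hgR) hPi, integral_sub hg hgR, hFubini]
        simp_rw [intervalIntegral_one_sub_mul_millsRatio]
        congr 2; funext t; ring
    _ = tailMass g y - tailMean g y * millsRatio y := by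
        rw [integral_sub (g1.integrableOn.const_mul _) hgR, integral_const_mul, tailMass, tailMean]
        ring

theorem integral_tailMean_sub_mul_millsRatio (gi : Integrable g)
    (g2 : Integrable fun x => x ^ 2 * g x) :
    IntegrableOn (fun y => (tailMean g y - g y) * (y * millsRatio y)) (Ioi 0) ∧
      ∫ y in Ioi 0, (tailMean g y - g y) * (y * millsRatio y) =
        (∫ y in Ioi 0, y ^ 2 * g y) - tailMean g 0 * millsRatio 0 := by
  have hRc := continuous_millsRatio
  obtain ⟨hPi, hFubini⟩ := integral_Ioi_mul_tailMean gm g0 g1 hP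
    (a := fun s => s * millsRatio s) (by fun_prop) (fun x hx => abs_mul_millsRatio_le_one hx) le_rfl
  have hgR := integrableOn_mul_millsRatio_mul gi le_rfl
  have hsplit : (fun y => (tailMean g y - g y) * (y * millsRatio y)) =
      fun y => y * millsRatio y * tailMean g y - y * millsRatio y * g y := by
    funext y; ring
  rw [hsplit]
  refine ⟨hPi.sub' hgR, ?_⟩
  have hinner : ∫ t in Ioi 0, t * g t * ∫ y in (0 : ℝ)..t, y * millsRatio y =
      ∫ t in Ioi 0, ((t ^ 2 * g t - millsRatio 0 * (t * g t)) + t * millsRatio t * g t) := by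
    simp_rw [intervalIntegral_mul_millsRatio]
    congr 1; funext t; ring
  have hg2 := g2.integrableOn (s := Ioi 0)
  have hg1 := (g1.const_mul (millsRatio 0)).integrableOn (s := Ioi 0)
  rw [integral_sub hPi hgR, hFubini, hinner, integral_add (hg2.sub' hg1) hgR,
    integral_sub hg2 hg1, integral_const_mul, tailMean]
  ring

end MillsTail

/-! ### Entropy estimates on the half line -/

/-- `τ` is the Stein factor of the density `g` on the positive half line: `τ g = P` there, where
`P` is the tail first moment. The density need be neither normalised nor centered, so that the
structure applies equally to a density and to its reflection. -/
structure HalfLineSteinFactor (g τ : ℝ → ℝ) : Prop where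
  measurable : Measurable g
  nonneg : ∀ x, 0 ≤ g x
  integrable : Integrable g
  integrable_sq_mul : Integrable fun x => x ^ 2 * g x
  measurable_factor : Measurable τ
  factor_mul_ae : ∀ᵐ x, 0 < x → τ x * g x = tailMean g x
  integrable_discrepancy : Integrable fun x => (1 - τ x) ^ 2 * g x
  tailMean_zero_pos : 0 < tailMean g 0

/-- The contribution `∫_{y > 0} (1 - τ)² g` of the positive half line to the Stein discrepancy. -/
noncomputable def halfLineDiscrepancy (g τ : ℝ → ℝ) : ℝ := ∫ y in Ioi 0, (1 - τ y) ^ 2 * g y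

section LogRatio

variable {g : ℝ → ℝ} (g0 : ∀ x, 0 ≤ g x) (g1 : Integrable fun x => x * g x)

include g0 g1

theorem log_tailMean_div_gaussianPDFReal {x : ℝ} (hx : 0 < x) (hP : 0 < tailMean g x) :
    Real.log (tailMean g x / φ x) = Real.log (tailMean g 0 * √(2 * Real.pi)) +
      ∫ y in (0 : ℝ)..x, y * (1 - g y / tailMean g y) := by
  obtain ⟨hint, hlog⟩ := intervalIntegral_deriv_tailMean g0 g1
    (fun s hs => Real.hasDerivAt_log hs.ne') (continuousOn_inv₀.mono fun s hs => ne_of_gt hs)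
    le_rfl hx.le hP
  have hsplit : ∫ y in (0 : ℝ)..x, y * (1 - g y / tailMean g y) =
      ∫ y in (0 : ℝ)..x, (y - (tailMean g y)⁻¹ * (y * g y)) := by
    congr 1; funext y; ring
  have hP0 := hP.trans_le (tailMean_anti g0 g1 le_rfl hx.le)
  have hpi : √(2 * Real.pi) ≠ 0 := by positivity
  rw [hsplit, intervalIntegral.integral_sub (by simp) hint, hlog, integral_id,
    gaussianPDFReal_zero_one, Real.log_div hP.ne' (by positivity),
    Real.log_mul (inv_ne_zero hpi) (Real.exp_pos _).ne', Real.log_mul hP0.ne' hpi, Real.log_exp,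
    Real.log_inv]
  ring

variable (gi : Integrable g)

include gi

theorem tailMass_eq_zero_of_tailMean_eq_zero {y : ℝ} (hy : 0 < y) (hP : tailMean g y = 0) :
    tailMass g y = 0 := by
  have hle := mul_tailMass_le_tailMean g0 gi g1 y
  rw [hP] at hle
  exact (nonpos_of_mul_nonpos_right hle hy).antisymm (tailMass_nonneg g0 y)

theorem integrableOn_mul_one_sub_div_tailMean_mul_tailMass (gm : Measurable g)
    (hP : IntegrableOn (tailMean g) (Ioi 0)) :
    IntegrableOn (fun y => y * (1 - g y / tailMean g y) * tailMass g y) (Ioi 0) := by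
  have hPm := (continuous_tailMean g1).measurable
  have hGm := (continuous_tailMass gi).measurable
  refine Integrable.mono' (hP.add gi.integrableOn) (by fun_prop)
    ((ae_restrict_iff' measurableSet_Ioi).2 (Eventually.of_forall fun y (hy : 0 < y) => ?_))
  have hg := g0 y
  rcases (tailMean_nonneg g0 hy.le).eq_or_lt with hp | hp
  · rw [tailMass_eq_zero_of_tailMean_eq_zero g0 g1 gi hy hp.symm]
    simp [hg, ← hp]
  have hyG : 0 ≤ y * tailMass g y := mul_nonneg hy.le (tailMass_nonneg g0 y)
  have habs : |1 - g y / tailMean g y| ≤ 1 + g y / tailMean g y := by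
    have hq : 0 ≤ g y / tailMean g y := by positivity
    rw [abs_le]; constructor <;> linarith
  calc ‖y * (1 - g y / tailMean g y) * tailMass g y‖
      = |1 - g y / tailMean g y| * (y * tailMass g y) := by
        rw [Real.norm_eq_abs, mul_right_comm, mul_comm, abs_mul, abs_of_nonneg hyG]
    _ ≤ (1 + g y / tailMean g y) * tailMean g y := by
        gcongr; exact mul_tailMass_le_tailMean g0 gi g1 y
    _ = tailMean g y + g y := by field_simp

theorem integral_mul_log_tailMean_div_gaussianPDFReal (gm : Measurable g)
    (hP : IntegrableOn (tailMean g) (Ioi 0)) :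
    IntegrableOn (fun x => g x * Real.log (tailMean g x / φ x)) (Ioi 0) ∧
      ∫ x in Ioi 0, g x * Real.log (tailMean g x / φ x) =
        tailMass g 0 * Real.log (tailMean g 0 * √(2 * Real.pi)) +
          ∫ y in Ioi 0, y * (1 - g y / tailMean g y) * tailMass g y := by
  have hPm := (continuous_tailMean g1).measurable
  have hGabs : ∀ y, ∫ t in Ioi y, |g t| = tailMass g y := fun y => by
    simp only [abs_of_nonneg (g0 _), tailMass]
  have hint := integrableOn_mul_one_sub_div_tailMean_mul_tailMass g0 g1 gi gm hP
  simp only [← hGabs] at hint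
  have hconst := (gi.integrableOn (s := Ioi 0)).mul_const
    (Real.log (tailMean g 0 * √(2 * Real.pi)))
  have hprim := integrableOn_mul_primitive (by fun_prop) gm gi hint
  have hpt : (fun x => g x * Real.log (tailMean g x / φ x)) =ᵐ[volume.restrict (Ioi 0)]
      fun x => g x * Real.log (tailMean g 0 * √(2 * Real.pi)) +
        g x * ∫ y in (0 : ℝ)..x, y * (1 - g y / tailMean g y) := by
    refine (ae_restrict_iff' measurableSet_Ioi).2 ?_
    filter_upwards [ae_tailMean_pos g0 g1] with x hx hx0
    by_cases hg : g x = 0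
    · simp [hg]
    · rw [log_tailMean_div_gaussianPDFReal g0 g1 hx0 (hx hx0 hg)]; ring
  refine ⟨(hconst.add hprim).congr hpt.symm, ?_⟩
  rw [integral_congr_ae hpt, integral_add hconst hprim,
    ← integral_Ioi_mul_integral_Ioi (by fun_prop) gm gi hint, integral_mul_const]
  rfl

end LogRatio

namespace HalfLineSteinFactor

variable {g τ : ℝ → ℝ}

theorem halfLineDiscrepancy_nonneg (h : HalfLineSteinFactor g τ) :
    0 ≤ halfLineDiscrepancy g τ :=
  setIntegral_nonneg measurableSet_Ioi fun y _ => mul_nonneg (sq_nonneg _) (h.nonneg y)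

theorem integrable_id_mul (h : HalfLineSteinFactor g τ) : Integrable fun x => x * g x :=
  integrable_id_mul_of_sq h.integrable h.integrable_sq_mul

theorem integrable_abs_one_sub_mul (h : HalfLineSteinFactor g τ) :
    Integrable fun x => |1 - τ x| * g x := by
  have gm := h.measurable
  have τm := h.measurable_factor
  refine (h.integrable.add h.integrable_discrepancy).mono' (by fun_prop)
    (Eventually.of_forall fun x => ?_)
  have hg := h.nonneg x
  have habs : |1 - τ x| ≤ 1 + (1 - τ x) ^ 2 := by
    nlinarith [sq_abs (1 - τ x), sq_nonneg (|1 - τ x| - 1)]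
  simp only [Pi.add_apply, norm_mul, Real.norm_eq_abs, abs_abs, abs_of_nonneg hg]
  nlinarith

theorem integrable_factor_mul (h : HalfLineSteinFactor g τ) :
    Integrable fun x => τ x * g x := by
  have gm := h.measurable
  have τm := h.measurable_factor
  refine (h.integrable.add h.integrable_abs_one_sub_mul).mono' (by fun_prop)
    (Eventually.of_forall fun x => ?_)
  have habs : |τ x| ≤ 1 + |1 - τ x| := by
    simpa using abs_sub (1 : ℝ) (1 - τ x)
  simp only [Pi.add_apply, norm_mul, Real.norm_eq_abs, abs_of_nonneg (h.nonneg x)]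
  nlinarith [h.nonneg x]

theorem integrableOn_tailMean (h : HalfLineSteinFactor g τ) : IntegrableOn (tailMean g) (Ioi 0) :=
  h.integrable_factor_mul.integrableOn.congr
    ((ae_restrict_iff' measurableSet_Ioi).2 h.factor_mul_ae)

theorem abs_sub_tailMean_ae (h : HalfLineSteinFactor g τ) :
    ∀ᵐ y, 0 < y → |g y - tailMean g y| = |1 - τ y| * g y := by
  filter_upwards [h.factor_mul_ae] with y hy hy0
  rw [← hy hy0, ← one_sub_mul, abs_mul, abs_of_nonneg (h.nonneg y)]

theorem abs_tailMass_sub_le (h : HalfLineSteinFactor g τ) {y : ℝ} (hy : 0 ≤ y) :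
    |tailMass g y - tailMean g y * millsRatio y| ≤ ∫ t in Ioi y, |1 - τ t| * g t := by
  rw [← integral_one_sub_mul_millsRatio_mul_sub_tailMean h.measurable h.nonneg
    h.integrable_id_mul h.integrableOn_tailMean h.integrable hy, ← Real.norm_eq_abs]
  refine norm_integral_le_of_norm_le h.integrable_abs_one_sub_mul.integrableOn
    ((ae_restrict_iff' measurableSet_Ioi).2 ?_)
  filter_upwards [h.abs_sub_tailMean_ae] with t ht hyt
  have ht0 : 0 < t := hy.trans_lt hyt
  rw [← ht ht0, norm_mul]
  exact mul_le_of_le_one_left (abs_nonneg _) (abs_one_sub_mul_millsRatio_le_one ht0.le)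

theorem lintegral_abs_millsRemainder_le (h : HalfLineSteinFactor g τ) :
    ∫⁻ y in Ioi 0, ENNReal.ofReal |(tailMean g y - g y) * (y / tailMean g y) *
        (tailMass g y - tailMean g y * millsRatio y)| ≤
      2 * ENNReal.ofReal (halfLineDiscrepancy g τ) := by
  have τm := h.measurable_factor
  have hhardy := lintegral_hardy_tailMean_le h.measurable h.nonneg h.integrable_id_mul
    (e := fun y => |1 - τ y|) (by fun_prop) (fun y => abs_nonneg _)
  simp only [sq_abs] at hhardy
  rw [halfLineDiscrepancy, ofReal_integral_eq_lintegral_ofReal h.integrable_discrepancy.integrableOn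
    (Eventually.of_forall fun y => mul_nonneg (sq_nonneg _) (h.nonneg y))]
  refine (lintegral_mono_ae ((ae_restrict_iff' measurableSet_Ioi).2 ?_)).trans hhardy
  filter_upwards [h.abs_sub_tailMean_ae] with y hy (hy0 : 0 < y)
  have hP := tailMean_nonneg h.nonneg hy0.le
  have hg := h.nonneg y
  rw [← ofReal_integral_eq_lintegral_ofReal h.integrable_abs_one_sub_mul.integrableOn
    (Eventually.of_forall fun t => mul_nonneg (abs_nonneg _) (h.nonneg t)),
    ← ENNReal.ofReal_mul (by positivity)]
  refine ENNReal.ofReal_le_ofReal ?_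
  calc |(tailMean g y - g y) * (y / tailMean g y) * (tailMass g y - tailMean g y * millsRatio y)|
      = y * g y / tailMean g y * |1 - τ y| * |tailMass g y - tailMean g y * millsRatio y| := by
        rw [abs_mul, abs_mul, abs_sub_comm (tailMean g y), hy hy0,
          abs_of_nonneg (by positivity : 0 ≤ y / tailMean g y)]
        ring
    _ ≤ y * g y / tailMean g y * |1 - τ y| * ∫ t in Ioi y, |1 - τ t| * g t := by
        gcongr; exact h.abs_tailMass_sub_le hy0.le

theorem integral_millsRemainder_le (h : HalfLineSteinFactor g τ) :
    IntegrableOn (fun y => (tailMean g y - g y) * (y / tailMean g y) *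
        (tailMass g y - tailMean g y * millsRatio y)) (Ioi 0) ∧
      ∫ y in Ioi 0, (tailMean g y - g y) * (y / tailMean g y) *
        (tailMass g y - tailMean g y * millsRatio y) ≤ 2 * halfLineDiscrepancy g τ := by
  have gm := h.measurable
  have hPm := (continuous_tailMean h.integrable_id_mul).measurable
  have hGm := (continuous_tailMass h.integrable).measurable
  have hRm := continuous_millsRatio.measurable
  set K : ℝ → ℝ := fun y => (tailMean g y - g y) * (y / tailMean g y) *
    (tailMass g y - tailMean g y * millsRatio y)
  have hlint : ∫⁻ y in Ioi 0, ENNReal.ofReal |K y| ≤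
      2 * ENNReal.ofReal (halfLineDiscrepancy g τ) := h.lintegral_abs_millsRemainder_le
  have htop : 2 * ENNReal.ofReal (halfLineDiscrepancy g τ) ≠ ∞ :=
    ENNReal.mul_ne_top (by simp) ENNReal.ofReal_ne_top
  have hK : IntegrableOn K (Ioi 0) := by
    refine ⟨by fun_prop, ?_⟩
    rw [hasFiniteIntegral_iff_norm]
    exact hlint.trans_lt htop.lt_top
  refine ⟨hK, ?_⟩
  calc ∫ y in Ioi 0, K y ≤ ∫ y in Ioi 0, |K y| :=
        integral_mono hK hK.abs fun y => le_abs_self _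
    _ = (∫⁻ y in Ioi 0, ENNReal.ofReal |K y|).toReal :=
        integral_eq_lintegral_of_nonneg_ae (Eventually.of_forall fun _ => abs_nonneg _)
          hK.abs.aestronglyMeasurable
    _ ≤ (2 * ENNReal.ofReal (halfLineDiscrepancy g τ)).toReal := ENNReal.toReal_mono htop hlint
    _ = 2 * halfLineDiscrepancy g τ := by
        rw [ENNReal.toReal_mul, ENNReal.toReal_ofReal h.halfLineDiscrepancy_nonneg,
          ENNReal.toReal_ofNat]

/-- Writing `G = P R + (G - P R)` isolates a term that the Gaussian case makes exact and a
remainder that is quadratic in `1 - τ`. -/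
theorem integral_mul_log_tailMean_div_gaussianPDFReal_le (h : HalfLineSteinFactor g τ) :
    IntegrableOn (fun x => g x * Real.log (tailMean g x / φ x)) (Ioi 0) ∧
      ∫ x in Ioi 0, g x * Real.log (tailMean g x / φ x) ≤
        tailMass g 0 * Real.log (tailMean g 0 * √(2 * Real.pi)) + (∫ y in Ioi 0, y ^ 2 * g y) -
          tailMean g 0 * (√(2 * Real.pi) / 2) + 2 * halfLineDiscrepancy g τ := by
  obtain ⟨hint, hlog⟩ := integral_mul_log_tailMean_div_gaussianPDFReal h.nonneg
    h.integrable_id_mul h.integrable h.measurable h.integrableOn_tailMean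
  obtain ⟨hmain, hmain_eq⟩ := integral_tailMean_sub_mul_millsRatio h.measurable h.nonneg
    h.integrable_id_mul h.integrableOn_tailMean h.integrable h.integrable_sq_mul
  obtain ⟨hrem, hrem_le⟩ := h.integral_millsRemainder_le
  have hsplit : (fun y => y * (1 - g y / tailMean g y) * tailMass g y)
      =ᵐ[volume.restrict (Ioi 0)] fun y => (tailMean g y - g y) * (y * millsRatio y) +
        (tailMean g y - g y) * (y / tailMean g y) *
          (tailMass g y - tailMean g y * millsRatio y) := by
    refine (ae_restrict_iff' measurableSet_Ioi).2 ?_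
    filter_upwards [ae_tailMean_pos h.nonneg h.integrable_id_mul] with y hy (hy0 : 0 < y)
    rcases (tailMean_nonneg h.nonneg hy0.le).eq_or_lt with hp | hp
    · have hg : g y = 0 := by_contra fun hg => (hy hy0 hg).ne hp
      simp [← hp, hg, tailMass_eq_zero_of_tailMean_eq_zero h.nonneg h.integrable_id_mul
        h.integrable hy0 hp.symm]
    · field_simp
      ring
  refine ⟨hint, ?_⟩
  rw [hlog, integral_congr_ae hsplit, integral_add hmain hrem, hmain_eq, millsRatio_zero]
  linarith

end HalfLineSteinFactor

/-! ### Gaussian mass beyond the endpoint of the support -/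

theorem mul_div_sub_le_of_mul_eq {s b l t p q : ℝ} (hs : 0 ≤ s) (hsb : s ≤ b) (hl : 0 < l)
    (hp : 0 < p) (hq : 0 ≤ q) (htq : t * q = p) :
    p⁻¹ * (s * q) - b / (2 * l) * ((1 - t) ^ 2 * q) - l / 2 * ((p ^ 2)⁻¹ * (s * q)) ≤ s := by
  have hyoung : (1 - t) / p ≤ ((1 - t) ^ 2 / l + l / p ^ 2) / 2 := by
    have hsq : ((1 - t) ^ 2 / l + l / p ^ 2) / 2 - (1 - t) / p =
        ((1 - t) * p - l) ^ 2 / (2 * l * p ^ 2) := by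
      field_simp; ring
    have hsq_nonneg : 0 ≤ ((1 - t) * p - l) ^ 2 / (2 * l * p ^ 2) := by positivity
    linarith
  have hmul : (1 - t) / p * (s * q) ≤ ((1 - t) ^ 2 / l + l / p ^ 2) / 2 * (s * q) := by gcongr
  have hlhs : (1 - t) / p * (s * q) = p⁻¹ * (s * q) - s := by
    rw [show (1 - t) / p * (s * q) = p⁻¹ * (s * q) - s * (t * q) / p by ring, htq]
    field_simp
  have hrhs : ((1 - t) ^ 2 / l + l / p ^ 2) / 2 * (s * q) =
      s / (2 * l) * ((1 - t) ^ 2 * q) + l / 2 * ((p ^ 2)⁻¹ * (s * q)) := by ring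
  have hmono : s / (2 * l) * ((1 - t) ^ 2 * q) ≤ b / (2 * l) * ((1 - t) ^ 2 * q) := by gcongr
  linarith

namespace HalfLineSteinFactor

variable {g τ : ℝ → ℝ}

theorem continuous_tailMean (h : HalfLineSteinFactor g τ) : Continuous (tailMean g) :=
  _root_.continuous_tailMean h.integrable_id_mul

theorem integral_sub_discrepancy_le {y b l : ℝ} (h : HalfLineSteinFactor g τ) (hy : 0 ≤ y)
    (hyb : y ≤ b) (hl : 0 < l) (hPy : 0 < tailMean g y) :
    (Real.log (tailMean g 0) - Real.log (tailMean g y)) - b / (2 * l) * halfLineDiscrepancy g τ -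
      l / 2 * ((tailMean g y)⁻¹ - (tailMean g 0)⁻¹) ≤ y ^ 2 / 2 := by
  obtain ⟨hlog, hlog_eq⟩ := intervalIntegral_deriv_tailMean h.nonneg h.integrable_id_mul
    (fun s hs => Real.hasDerivAt_log hs.ne') (continuousOn_inv₀.mono fun s hs => ne_of_gt hs)
    le_rfl hy hPy
  obtain ⟨hinv, hinv_eq⟩ := intervalIntegral_deriv_tailMean h.nonneg h.integrable_id_mul
    (u := fun s => -s⁻¹) (u' := fun s => (s ^ 2)⁻¹)
    (fun s hs => (hasDerivAt_inv hs.ne').neg.congr_deriv (neg_neg _))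
    ((continuousOn_pow 2).inv₀ fun s hs => pow_ne_zero 2 (ne_of_gt hs)) le_rfl hy hPy
  have hdisc : IntervalIntegrable (fun s => (1 - τ s) ^ 2 * g s) volume 0 y :=
    h.integrable_discrepancy.intervalIntegrable
  have hint : ∫ s in (0 : ℝ)..y, ((tailMean g s)⁻¹ * (s * g s) -
      b / (2 * l) * ((1 - τ s) ^ 2 * g s) - l / 2 * ((tailMean g s ^ 2)⁻¹ * (s * g s))) ≤
      ∫ s in (0 : ℝ)..y, s := by
    refine intervalIntegral.integral_mono_ae_restrict hy
      ((hlog.sub (hdisc.const_mul _)).sub (hinv.const_mul _)) (by simp)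
      ((ae_restrict_iff' measurableSet_Icc).2 ?_)
    filter_upwards [h.factor_mul_ae, Measure.ae_ne volume (0 : ℝ)] with s hs hs0 hsmem
    exact mul_div_sub_le_of_mul_eq hsmem.1 (hsmem.2.trans hyb) hl
      (hPy.trans_le (tailMean_anti h.nonneg h.integrable_id_mul hsmem.1 hsmem.2)) (h.nonneg s)
      (hs (hsmem.1.lt_of_ne' hs0))
  rw [intervalIntegral.integral_sub (hlog.sub (hdisc.const_mul _)) (hinv.const_mul _),
    intervalIntegral.integral_sub hlog (hdisc.const_mul _), intervalIntegral.integral_const_mul,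
    intervalIntegral.integral_const_mul, hlog_eq, hinv_eq, integral_id] at hint
  have hpart : ∫ s in (0 : ℝ)..y, (1 - τ s) ^ 2 * g s ≤ halfLineDiscrepancy g τ := by
    rw [intervalIntegral.integral_of_le hy]
    exact setIntegral_mono_set h.integrable_discrepancy.integrableOn
      (Eventually.of_forall fun s => mul_nonneg (sq_nonneg _) (h.nonneg s))
      Ioc_subset_Ioi_self.eventuallyLE
  have hb : 0 ≤ b / (2 * l) := by have := hy.trans hyb; positivity
  have hscale := mul_le_mul_of_nonneg_left hpart hb
  linarith

/-- The choice `P(y) = P(0) exp (-(b² / 2 + 1))` of the intermediate point turns the logarithmic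
inequality into a bound on `b`. -/
theorem tailMean_zero_mul_exp_le {b : ℝ} (h : HalfLineSteinFactor g τ) (hb : 0 ≤ b)
    (hPb : tailMean g b = 0) :
    tailMean g 0 * Real.exp (-(1 / 2) * b ^ 2) ≤
      Real.exp 1 * (b * halfLineDiscrepancy g τ) := by
  have hP0 := h.tailMean_zero_pos
  set l := tailMean g 0 * Real.exp (-(b ^ 2 / 2 + 1)) with hl_def
  have hl : 0 < l := by positivity
  have hl_le : l ≤ tailMean g 0 :=
    mul_le_of_le_one_right hP0.le (Real.exp_le_one_iff.2 (by nlinarith [sq_nonneg b]))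
  obtain ⟨y, ⟨hy, hyb⟩, hPy⟩ := intermediate_value_Icc' hb h.continuous_tailMean.continuousOn
    (show l ∈ Icc (tailMean g b) (tailMean g 0) from ⟨hPb.trans_le hl.le, hl_le⟩)
  have hmain := h.integral_sub_discrepancy_le hy hyb hl (hPy ▸ hl)
  have hlog : Real.log l = Real.log (tailMean g 0) - (b ^ 2 / 2 + 1) := by
    rw [hl_def, Real.log_mul hP0.ne' (Real.exp_pos _).ne', Real.log_exp]; ring
  have hlinv : l / 2 * (l⁻¹ - (tailMean g 0)⁻¹) ≤ 1 / 2 := by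
    have hpos : 0 ≤ l / 2 * (tailMean g 0)⁻¹ := by positivity
    have hcancel : l / 2 * l⁻¹ = 1 / 2 := by field_simp
    linarith
  rw [hPy, hlog] at hmain
  have hy2 : y ^ 2 ≤ b ^ 2 := by gcongr
  have hhalf : 1 / 2 ≤ b / (2 * l) * halfLineDiscrepancy g τ := by linarith
  have hl_bound : l ≤ b * halfLineDiscrepancy g τ := by
    rw [div_mul_eq_mul_div, div_le_div_iff₀ two_pos (by positivity)] at hhalf
    linarith
  calc tailMean g 0 * Real.exp (-(1 / 2) * b ^ 2) = Real.exp 1 * l := by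
        rw [hl_def, show -(1 / 2) * b ^ 2 = 1 + -(b ^ 2 / 2 + 1) by ring, Real.exp_add]; ring
    _ ≤ Real.exp 1 * (b * halfLineDiscrepancy g τ) := by gcongr

theorem tailMass_gaussianPDFReal_le {b : ℝ} (h : HalfLineSteinFactor g τ) (hb : 0 < b)
    (hPb : tailMean g b = 0) :
    tailMass φ b ≤ Real.exp 1 * (halfLineDiscrepancy g τ / (√(2 * Real.pi) * tailMean g 0)) := by
  have hP0 := h.tailMean_zero_pos
  have hmills : b * tailMass φ b ≤ (√(2 * Real.pi))⁻¹ * Real.exp (-(1 / 2) * b ^ 2) := by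
    rw [← gaussianPDFReal_zero_one, ← tailMean_gaussianPDFReal]
    exact mul_tailMass_le_tailMean (gaussianPDFReal_nonneg 0 1) (integrable_gaussianPDFReal 0 1)
      integrable_id_mul_gaussianPDFReal b
  rw [← mul_div_assoc, le_div_iff₀ (by positivity)]
  refine le_of_mul_le_mul_left ?_ hb
  calc b * (tailMass φ b * (√(2 * Real.pi) * tailMean g 0))
      = b * tailMass φ b * (√(2 * Real.pi) * tailMean g 0) := by ring
    _ ≤ (√(2 * Real.pi))⁻¹ * Real.exp (-(1 / 2) * b ^ 2) * (√(2 * Real.pi) * tailMean g 0) := by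
        gcongr
    _ = tailMean g 0 * Real.exp (-(1 / 2) * b ^ 2) := by field_simp
    _ ≤ Real.exp 1 * (b * halfLineDiscrepancy g τ) := h.tailMean_zero_mul_exp_le hb.le hPb
    _ = b * (Real.exp 1 * halfLineDiscrepancy g τ) := by ring

theorem integral_gaussianPDFReal_zeros_le (h : HalfLineSteinFactor g τ) :
    ∫ x in Ioi 0, {x | g x = 0}.indicator φ x ≤
      Real.exp 1 * (halfLineDiscrepancy g τ / (√(2 * Real.pi) * tailMean g 0)) := by
  have hP0 := h.tailMean_zero_pos
  have hd := h.halfLineDiscrepancy_nonneg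
  have hzero : ∀ᵐ x, 0 < x → g x = 0 → tailMean g x = 0 := by
    filter_upwards [h.factor_mul_ae] with x hx h0 h1
    rw [← hx h0, h1, mul_zero]
  rcases tailMean_pos_or_exists_endpoint h.integrable_id_mul
    (fun x => tailMean_nonneg h.nonneg) with hpos | ⟨b, hb, hPb, hpos⟩
  · have hnull : ∫ x in Ioi 0, {x | g x = 0}.indicator φ x = 0 := by
      refine integral_eq_zero_of_ae ((ae_restrict_iff' measurableSet_Ioi).2 ?_)
      filter_upwards [hzero] with x hx hx0
      exact indicator_of_notMem (s := {x | g x = 0})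
        (fun h1 => (hpos x (le_of_lt hx0)).ne' (hx hx0 h1)) φ
    rw [hnull]
    positivity
  have hb0 : 0 < b := hb.lt_of_ne fun h0 => hP0.ne' (h0 ▸ hPb)
  refine le_trans ?_ (h.tailMass_gaussianPDFReal_le hb0 hPb)
  have hIoi : tailMass φ b = ∫ x in Ioi 0, (Ioi b).indicator φ x := by
    rw [setIntegral_indicator measurableSet_Ioi, inter_eq_right.2 (Ioi_subset_Ioi hb), tailMass]
  have hφ := gaussianPDFReal_nonneg 0 1
  rw [hIoi]
  refine integral_mono_of_nonneg (Eventually.of_forall (indicator_nonneg fun x _ => hφ x))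
    ((integrable_gaussianPDFReal 0 1).indicator measurableSet_Ioi).integrableOn
    ((ae_restrict_iff' measurableSet_Ioi).2 ?_)
  filter_upwards [hzero, Measure.ae_ne volume b] with x hx hxb hx0
  by_cases h1 : g x = 0
  · have hbx : b < x := lt_of_le_of_ne
      (le_of_not_gt fun hlt => (hpos x (le_of_lt hx0) hlt).ne' (hx hx0 h1)) hxb.symm
    rw [indicator_of_mem (show x ∈ {x | g x = 0} from h1), indicator_of_mem (mem_Ioi.2 hbx)]
  · rw [indicator_of_notMem (show x ∉ {x | g x = 0} from h1)]
    exact indicator_nonneg (fun x _ => hφ x) x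

end HalfLineSteinFactor

/-! ### Total variation regularity -/

/-- Regularity of a measure under small affine maps `y ↦ √t y + √(1 - t) x`: the one-sided,
set-by-set form of the bound `κ (1 + |x|) t⁻¹ (1 - t) ^ α` on the total variation distance between
the measure and its image. -/
def IsTVRegular (μ : Measure ℝ) (κ α : ℝ) : Prop :=
  ∀ x : ℝ, ∀ t ∈ Ioc (0 : ℝ) 1, ∀ A : Set ℝ, MeasurableSet A →
    μ A ≤ μ {y | √t * y + √(1 - t) * x ∈ A} + ENNReal.ofReal (κ * (1 + |x|) * t⁻¹ * (1 - t) ^ α)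

theorem IsTVRegular.map_neg {μ : Measure ℝ} {κ α : ℝ} (h : IsTVRegular μ κ α) :
    IsTVRegular (μ.map Neg.neg) κ α := by
  intro x t ht A hA
  have hset : Neg.neg ⁻¹' {y | √t * y + √(1 - t) * x ∈ A} =
      {y | √t * y + √(1 - t) * -x ∈ Neg.neg ⁻¹' A} := by
    ext y
    simp only [mem_preimage, mem_ofPred_eq]
    ring_nf
  have hmeas : MeasurableSet {y | √t * y + √(1 - t) * x ∈ A} :=
    (by fun_prop : Measurable fun y => √t * y + √(1 - t) * x) hA
  rw [Measure.map_apply measurable_neg hA, Measure.map_apply measurable_neg hmeas, hset]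
  simpa only [abs_neg] using h (-x) t ht (Neg.neg ⁻¹' A) (measurable_neg hA)

theorem withDensity_comp_neg (d : ℝ → ℝ≥0∞) :
    volume.withDensity (fun x => d (-x)) = (volume.withDensity d).map Neg.neg := by
  ext A hA
  rw [Measure.map_apply measurable_neg hA, withDensity_apply _ hA,
    withDensity_apply _ (measurable_neg hA), ← (Measure.measurePreserving_neg volume
      ).setLIntegral_comp_preimage_emb (MeasurableEquiv.neg ℝ).measurableEmbedding]
  simp

theorem volume_setOf_sub_mul_mem (c : ℝ) {w : ℝ} (hw : 0 < w) (A : Set ℝ) :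
    volume {u | c - w * u ∈ A} = ENNReal.ofReal w⁻¹ * volume A := by
  have hset : {u | c - w * u ∈ A} = (-w * ·) ⁻¹' ((c + ·) ⁻¹' A) := by
    ext u
    simp [sub_eq_add_neg]
  rw [hset, Real.volume_preimage_mul_left (neg_ne_zero.2 hw.ne'), measure_preimage_add, inv_neg,
    abs_neg, abs_of_pos (inv_pos.2 hw)]

/-- Each fixed `y > 0` is displaced to the left, over an interval of `u` on which the displaced
point has density `1 / w`; Fubini then leaves the tails `μ (a, ∞)`. -/
theorem lintegral_measure_setOf_mul_sub_mem_le (μ : Measure ℝ) [SFinite μ] {A : Set ℝ}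
    (hA : MeasurableSet A) (hA0 : A ⊆ Ioi 0) {s w : ℝ} (hs0 : 0 ≤ s) (hs1 : s ≤ 1) (hw : 0 < w) :
    ∫⁻ u in Ioo (0 : ℝ) 1, μ {y | s * y - w * u ∈ A} ≤
      ENNReal.ofReal w⁻¹ * ∫⁻ a in A, μ (Ioi a) := by
  have hdispl : MeasurableSet {p : ℝ × ℝ | s * p.2 - w * p.1 ∈ A} :=
    (by fun_prop : Measurable fun p : ℝ × ℝ => s * p.2 - w * p.1) hA
  have hlt : MeasurableSet {p : ℝ × ℝ | p.1 < p.2} := measurableSet_lt measurable_fst measurable_snd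
  have hsection (y : ℝ) : (volume.restrict (Ioo (0 : ℝ) 1)) {u | s * y - w * u ∈ A} ≤
      ENNReal.ofReal w⁻¹ * (volume.restrict A) {a | a < y} := by
    rw [Measure.restrict_apply' measurableSet_Ioo, Measure.restrict_apply' hA,
      ← volume_setOf_sub_mul_mem (s * y) hw]
    refine measure_mono fun u ⟨huA, hu⟩ => ⟨?_, huA⟩
    have hpos : 0 < s * y - w * u := hA0 huA
    have hwu : 0 < w * u := mul_pos hw hu.1
    have hy : 0 < y := pos_of_mul_pos_right (by linarith : 0 < s * y) hs0
    change s * y - w * u < y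
    nlinarith [mul_nonneg (sub_nonneg.2 hs1) hy.le]
  calc ∫⁻ u in Ioo (0 : ℝ) 1, μ {y | s * y - w * u ∈ A}
      = ∫⁻ y, (volume.restrict (Ioo (0 : ℝ) 1)) {u | s * y - w * u ∈ A} ∂μ :=
        (Measure.prod_apply hdispl).symm.trans (Measure.prod_apply_symm hdispl)
    _ ≤ ∫⁻ y, ENNReal.ofReal w⁻¹ * (volume.restrict A) {a | a < y} ∂μ := lintegral_mono hsection
    _ = ENNReal.ofReal w⁻¹ * ∫⁻ y, (volume.restrict A) {a | a < y} ∂μ :=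
        lintegral_const_mul' _ _ ENNReal.ofReal_ne_top
    _ = ENNReal.ofReal w⁻¹ * ∫⁻ a in A, μ (Ioi a) := by
        congr 1
        exact (Measure.prod_apply_symm hlt).symm.trans (Measure.prod_apply hlt)

theorem lintegral_Ioo_ofReal_mul_one_add {c : ℝ} (hc : 0 ≤ c) :
    ∫⁻ u in Ioo (0 : ℝ) 1, ENNReal.ofReal (c * (1 + u)) = ENNReal.ofReal (3 / 2 * c) := by
  rw [← ofReal_integral_eq_lintegral_ofReal, ← integral_Ioc_eq_integral_Ioo,
    ← intervalIntegral.integral_of_le zero_le_one, intervalIntegral.integral_const_mul,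
    intervalIntegral.integral_add (by simp) (by simp)]
  · simp only [intervalIntegral.integral_const, integral_id, smul_eq_mul]
    congr 1
    ring
  · exact (Continuous.integrableOn_Icc (by fun_prop)).mono_set Ioo_subset_Icc_self
  · filter_upwards [self_mem_ae_restrict measurableSet_Ioo] with _ hu
    exact mul_nonneg hc (add_nonneg zero_le_one hu.1.le)

/-- Averaging the regularity bound with `1 - t = w ^ 2`, `x = -u` over `0 < u < 1`. -/
theorem IsTVRegular.measure_le {μ : Measure ℝ} [IsFiniteMeasure μ] {κ α : ℝ}
    (h : IsTVRegular μ κ α) (hκ : 0 ≤ κ) {A : Set ℝ} (hA : MeasurableSet A) (hA0 : A ⊆ Ioi 0)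
    {w : ℝ} (hw0 : 0 < w) (hw1 : w < 1)
    (htail : ∫⁻ a in A, μ (Ioi a) ≤ ENNReal.ofReal (w / 2) * μ A) :
    μ A ≤ ENNReal.ofReal (3 * κ * (1 - w ^ 2)⁻¹ * (w ^ 2) ^ α) := by
  set t := 1 - w ^ 2
  have ht0 : 0 < t := by nlinarith
  have ht1 : t ≤ 1 := by nlinarith
  have hcompl : 1 - t = w ^ 2 := by ring
  have hsqrt : √(1 - t) = w := by rw [hcompl, Real.sqrt_sq hw0.le]
  set c := κ * t⁻¹ * (w ^ 2) ^ α
  have hc : 0 ≤ c := by positivity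
  have hpointwise : ∀ u ∈ Ioo (0 : ℝ) 1,
      μ A ≤ μ {y | √t * y - w * u ∈ A} + ENNReal.ofReal (c * (1 + u)) := by
    intro u hu
    have hreg := h (-u) t ⟨ht0, ht1⟩ A hA
    rw [hsqrt, hcompl, abs_neg, abs_of_pos hu.1] at hreg
    convert hreg using 3
    · simp only [mul_neg, sub_eq_add_neg]
    · ring
  have haverage : μ A ≤ ENNReal.ofReal (1 / 2) * μ A + ENNReal.ofReal (3 / 2 * c) := by
    calc μ A = ∫⁻ _ in Ioo (0 : ℝ) 1, μ A := by simp
      _ ≤ ∫⁻ u in Ioo (0 : ℝ) 1, (μ {y | √t * y - w * u ∈ A} + ENNReal.ofReal (c * (1 + u))) :=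
        setLIntegral_mono' measurableSet_Ioo hpointwise
      _ ≤ ENNReal.ofReal w⁻¹ * (ENNReal.ofReal (w / 2) * μ A) + ENNReal.ofReal (3 / 2 * c) := by
        rw [lintegral_add_right _ (by fun_prop), lintegral_Ioo_ofReal_mul_one_add hc]
        gcongr
        refine (lintegral_measure_setOf_mul_sub_mem_le μ hA hA0 (Real.sqrt_nonneg t)
          (Real.sqrt_le_one.2 ht1) hw0).trans ?_
        gcongr
      _ = ENNReal.ofReal (1 / 2) * μ A + ENNReal.ofReal (3 / 2 * c) := by
        rw [← mul_assoc, ← ENNReal.ofReal_mul (by positivity)]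
        congr 3
        field_simp
  rw [← ENNReal.ofReal_toReal (measure_ne_top μ A), ← ENNReal.ofReal_mul (by norm_num),
    ← ENNReal.ofReal_add (by positivity) (by positivity),
    ENNReal.ofReal_le_ofReal_iff (by positivity)] at haverage
  rw [← ENNReal.ofReal_toReal (measure_ne_top μ A)]
  refine ENNReal.ofReal_le_ofReal ?_
  have : 3 * κ * t⁻¹ * (w ^ 2) ^ α = 3 * c := by ring
  linarith

theorem withDensity_ofReal_Ioi {g : ℝ → ℝ} (g0 : ∀ x, 0 ≤ g x) (gi : Integrable g) (a : ℝ) :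
    volume.withDensity (fun x => ENNReal.ofReal (g x)) (Ioi a) = ENNReal.ofReal (tailMass g a) := by
  rw [withDensity_apply _ measurableSet_Ioi, tailMass,
    ofReal_integral_eq_lintegral_ofReal gi.integrableOn (Eventually.of_forall g0)]

theorem mul_inv_one_sub_sq_mul_rpow_le {κ α v : ℝ} (hκ : 0 ≤ κ) (hv : 0 < v)
    (hv1 : v ≤ 1 / 13) :
    3 * κ * (1 - (11 * v) ^ 2)⁻¹ * ((11 * v) ^ 2) ^ α ≤ 233 / 2 * κ * v ^ min 1 (2 * α) := by
  have hpow : ((11 * v) ^ 2) ^ α ≤ 11 * v ^ min 1 (2 * α) := by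
    calc ((11 * v) ^ 2) ^ α = (11 * v) ^ (2 * α) := by
          rw [← Real.rpow_natCast, ← Real.rpow_mul (by positivity), Nat.cast_ofNat]
      _ ≤ (11 * v) ^ min 1 (2 * α) :=
          Real.rpow_le_rpow_of_exponent_ge (by positivity) (by linarith) (min_le_right _ _)
      _ = 11 ^ min 1 (2 * α) * v ^ min 1 (2 * α) := Real.mul_rpow (by norm_num) hv.le
      _ ≤ 11 ^ (1 : ℝ) * v ^ min 1 (2 * α) := by
          gcongr
          · norm_num
          · exact min_le_left _ _
      _ = 11 * v ^ min 1 (2 * α) := by rw [Real.rpow_one]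
  have hinv : (1 - (11 * v) ^ 2)⁻¹ ≤ 169 / 48 := by
    rw [inv_le_comm₀ (by nlinarith) (by norm_num)]
    nlinarith
  calc 3 * κ * (1 - (11 * v) ^ 2)⁻¹ * ((11 * v) ^ 2) ^ α
      ≤ 3 * κ * (169 / 48) * (11 * v ^ min 1 (2 * α)) := by gcongr
    _ ≤ 233 / 2 * κ * v ^ min 1 (2 * α) := by
      have : 0 ≤ κ * v ^ min 1 (2 * α) := by positivity
      nlinarith

namespace HalfLineSteinFactor

variable {g τ : ℝ → ℝ}

/-- Where `τ` is below `v` the tail is light, `tailMass g ≤ (v / P 0) g`, so that set loses half of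
its mass when moved to the left by `11 v`. -/
theorem withDensity_factor_lt_le (h : HalfLineSteinFactor g τ) {κ α : ℝ} (hκ : 0 ≤ κ)
    (hμ : IsTVRegular (volume.withDensity fun x => ENNReal.ofReal (g x)) κ α)
    (hmass : tailMass g 0 ≤ 1) (hmean : 2 / 11 ≤ tailMean g 0) {v : ℝ} (hv : 0 < v)
    (hv1 : v ≤ 1 / 13) :
    volume.withDensity (fun x => ENNReal.ofReal (g x)) {y | 0 < y ∧ τ y < v} ≤
      ENNReal.ofReal (233 / 2 * κ * v ^ min 1 (2 * α)) := by
  set μ := volume.withDensity fun x => ENNReal.ofReal (g x)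
  set A := {y | 0 < y ∧ tailMean g y ≤ v * g y}
  have hA : MeasurableSet A := (measurableSet_lt measurable_const measurable_id).inter
    (measurableSet_le h.continuous_tailMean.measurable (h.measurable.const_mul v))
  have hsub : μ {y | 0 < y ∧ τ y < v} ≤ μ A := by
    refine measure_mono_ae ((withDensity_absolutelyContinuous _ _).ae_le ?_)
    filter_upwards [h.factor_mul_ae] with y hy
    rintro ⟨hy0, hτ⟩
    exact ⟨hy0, hy hy0 ▸ mul_le_mul_of_nonneg_right hτ.le (h.nonneg y)⟩
  have hfinite : IsFiniteMeasure μ := isFiniteMeasure_withDensity_ofReal h.integrable.2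
  have htailMass : ∀ a ∈ A, tailMass g a ≤ 11 * v / 2 * g a := by
    rintro a ⟨ha, hmean_le⟩
    have hratio := tailMean_zero_mul_tailMass_le h.nonneg h.integrable_id_mul h.integrable ha.le
    have hPa : 0 ≤ tailMean g a := tailMean_nonneg h.nonneg ha.le
    have hGa : 0 ≤ tailMass g a := tailMass_nonneg h.nonneg a
    have hsmall : tailMean g 0 * tailMass g a ≤ tailMean g a :=
      hratio.trans (mul_le_of_le_one_right hPa hmass)
    have hlow : 2 / 11 * tailMass g a ≤ tailMean g 0 * tailMass g a := by gcongr
    linarith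
  have htail : ∫⁻ a in A, μ (Ioi a) ≤ ENNReal.ofReal (11 * v / 2) * μ A := by
    rw [withDensity_apply _ hA, ← lintegral_const_mul' _ _ ENNReal.ofReal_ne_top]
    refine setLIntegral_mono' hA fun a ha => ?_
    rw [withDensity_ofReal_Ioi h.nonneg h.integrable, ← ENNReal.ofReal_mul (by positivity)]
    exact ENNReal.ofReal_le_ofReal (htailMass a ha)
  calc μ {y | 0 < y ∧ τ y < v} ≤ μ A := hsub
    _ ≤ ENNReal.ofReal (3 * κ * (1 - (11 * v) ^ 2)⁻¹ * ((11 * v) ^ 2) ^ α) :=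
      hμ.measure_le hκ hA (fun a ha => ha.1) (by positivity) (by linarith) htail
    _ ≤ ENNReal.ofReal (233 / 2 * κ * v ^ min 1 (2 * α)) :=
      ENNReal.ofReal_le_ofReal (mul_inv_one_sub_sq_mul_rpow_le hκ hv hv1)

end HalfLineSteinFactor

/-! ### Moments on the half line -/

theorem abs_two_mul_mul_mul_le {s t y q : ℝ} (hs : 0 < s) (hq : 0 ≤ q) :
    |2 * y * (t * q)| ≤ 2 * |y * q| + s * (y ^ 2 * q) + s⁻¹ * ((1 - t) ^ 2 * q) := by
  have hyoung : |2 * y * (1 - t)| ≤ s * y ^ 2 + s⁻¹ * (1 - t) ^ 2 := by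
    have hadd : s * y ^ 2 + s⁻¹ * (1 - t) ^ 2 + 2 * y * (1 - t) = s⁻¹ * (s * y + (1 - t)) ^ 2 := by
      field_simp; ring
    have hsub : s * y ^ 2 + s⁻¹ * (1 - t) ^ 2 - 2 * y * (1 - t) = s⁻¹ * (s * y - (1 - t)) ^ 2 := by
      field_simp; ring
    have hadd_nonneg : 0 ≤ s⁻¹ * (s * y + (1 - t)) ^ 2 := by positivity
    have hsub_nonneg : 0 ≤ s⁻¹ * (s * y - (1 - t)) ^ 2 := by positivity
    exact abs_le.2 ⟨by linarith, by linarith⟩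
  calc |2 * y * (t * q)| = |2 * (y * q) - 2 * y * (1 - t) * q| := by ring_nf
    _ ≤ |2 * (y * q)| + |2 * y * (1 - t) * q| := abs_sub _ _
    _ = 2 * |y * q| + |2 * y * (1 - t)| * q := by
      rw [abs_mul 2, abs_two, abs_mul (2 * y * (1 - t)), abs_of_nonneg hq]
    _ ≤ 2 * |y * q| + (s * y ^ 2 + s⁻¹ * (1 - t) ^ 2) * q := by gcongr
    _ = 2 * |y * q| + s * (y ^ 2 * q) + s⁻¹ * ((1 - t) ^ 2 * q) := by ring

namespace HalfLineSteinFactor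

variable {g τ : ℝ → ℝ}

theorem integral_factor_mul (h : HalfLineSteinFactor g τ) :
    ∫ x in Ioi 0, τ x * g x = ∫ x in Ioi 0, x ^ 2 * g x := by
  calc ∫ x in Ioi 0, τ x * g x = ∫ x in Ioi 0, 1 * tailMean g x := by
        simp only [one_mul]
        exact integral_congr_ae ((ae_restrict_iff' measurableSet_Ioi).2 h.factor_mul_ae)
    _ = ∫ t in Ioi 0, t * g t * ∫ _ in (0 : ℝ)..t, (1 : ℝ) :=
        (integral_Ioi_mul_tailMean h.measurable h.nonneg h.integrable_id_mul h.integrableOn_tailMean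
          continuous_const (by simp) le_rfl).2
    _ = ∫ x in Ioi 0, x ^ 2 * g x := by
        congr 1; funext t; simp only [integral_one, sub_zero]; ring

theorem integral_two_mul_mul_factor_mul_le (h : HalfLineSteinFactor g τ) {s : ℝ} (hs : 0 < s) :
    Integrable (fun y => 2 * y * (τ y * g y)) ∧ ∫ y in Ioi 0, 2 * y * (τ y * g y) ≤
      2 * tailMean g 0 + s * (∫ t in Ioi 0, t ^ 2 * g t) + halfLineDiscrepancy g τ / s := by
  have gm := h.measurable
  have τm := h.measurable_factor
  have hfirst := h.integrable_id_mul.abs.const_mul 2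
  have hsecond := h.integrable_sq_mul.const_mul s
  have hdisc := h.integrable_discrepancy.const_mul s⁻¹
  have hsum : Integrable fun y => 2 * |y * g y| + s * (y ^ 2 * g y) := hfirst.add hsecond
  have hbound (y : ℝ) := abs_two_mul_mul_mul_le (t := τ y) (y := y) hs (h.nonneg y)
  have hint : Integrable fun y => 2 * y * (τ y * g y) :=
    (hsum.add hdisc).mono' (by fun_prop) (Eventually.of_forall hbound)
  refine ⟨hint, (integral_mono hint.integrableOn (hsum.add hdisc).integrableOn
    fun y => (le_abs_self _).trans (hbound y)).trans_eq ?_⟩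
  have habs : ∫ y in Ioi 0, |y * g y| = tailMean g 0 :=
    setIntegral_congr_fun measurableSet_Ioi fun y hy =>
      abs_of_nonneg (mul_nonneg (le_of_lt hy) (h.nonneg y))
  rw [integral_add' hsum.integrableOn hdisc.integrableOn,
    integral_add hfirst.integrableOn hsecond.integrableOn, integral_const_mul, integral_const_mul,
    integral_const_mul, habs, halfLineDiscrepancy, div_eq_inv_mul]

theorem integral_cube_mul_le (h : HalfLineSteinFactor g τ) {s : ℝ} (hs : 0 < s) :
    IntegrableOn (fun t => t ^ 3 * g t) (Ioi 0) ∧ ∫ t in Ioi 0, t ^ 3 * g t ≤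
      2 * tailMean g 0 + s * (∫ t in Ioi 0, t ^ 2 * g t) + halfLineDiscrepancy g τ / s := by
  have gm := h.measurable
  obtain ⟨hint, hle⟩ := h.integral_two_mul_mul_factor_mul_le hs
  have hfactor : ∀ᵐ y ∂volume.restrict (Ioi 0), 2 * y * (τ y * g y) = 2 * y * tailMean g y := by
    filter_upwards [(ae_restrict_iff' measurableSet_Ioi).2 h.factor_mul_ae] with y hy
    rw [hy]
  have htail : IntegrableOn (fun y => 2 * y * ∫ t in Ioi y, |t * g t|) (Ioi 0) := by
    have htail' : IntegrableOn (fun y => 2 * y * tailMean g y) (Ioi 0) :=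
      hint.integrableOn.congr hfactor
    refine htail'.congr_fun (fun y (hy : 0 < y) => ?_) measurableSet_Ioi
    refine congrArg (2 * y * ·) (setIntegral_congr_fun measurableSet_Ioi fun t ht => ?_)
    exact (abs_of_nonneg (mul_nonneg (hy.trans ht).le (h.nonneg t))).symm
  have hcube : (fun t => t * g t * ∫ y in (0 : ℝ)..t, 2 * y) = fun t => t ^ 3 * g t := by
    funext t
    rw [intervalIntegral.integral_const_mul, integral_id]
    ring
  have hprim := integrableOn_mul_primitive (by fun_prop) (by fun_prop) h.integrable_id_mul htail
  have hswap := integral_Ioi_mul_integral_Ioi (by fun_prop) (by fun_prop) h.integrable_id_mul htail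
  rw [hcube] at hprim hswap
  refine ⟨hprim, ?_⟩
  rw [← hswap]
  exact (integral_congr_ae hfactor).symm.trans_le hle

theorem two_mul_integral_sq_mul_le (h : HalfLineSteinFactor g τ) {s r : ℝ} (hs : 0 < s)
    (hr : 0 < r) :
    2 * ∫ t in Ioi 0, t ^ 2 * g t ≤ r * tailMean g 0 +
      (2 * tailMean g 0 + s * (∫ t in Ioi 0, t ^ 2 * g t) + halfLineDiscrepancy g τ / s) / r := by
  obtain ⟨hint, hle⟩ := h.integral_cube_mul_le hs
  have hfirst := (h.integrable_id_mul.const_mul r).integrableOn (s := Ioi 0)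
  have hpointwise : ∀ t ∈ Ioi (0 : ℝ), 2 * (t ^ 2 * g t) ≤ r * (t * g t) + r⁻¹ * (t ^ 3 * g t) := by
    intro t (ht : 0 < t)
    have hsq : r * (t * g t) + r⁻¹ * (t ^ 3 * g t) - 2 * (t ^ 2 * g t) =
        t * g t / r * (t - r) ^ 2 := by
      field_simp; ring
    have hsq_nonneg : 0 ≤ t * g t / r * (t - r) ^ 2 :=
      mul_nonneg (div_nonneg (mul_nonneg ht.le (h.nonneg t)) hr.le) (sq_nonneg _)
    linarith
  calc 2 * ∫ t in Ioi 0, t ^ 2 * g t = ∫ t in Ioi 0, 2 * (t ^ 2 * g t) :=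
        (integral_const_mul _ _).symm
    _ ≤ ∫ t in Ioi 0, (r * (t * g t) + r⁻¹ * (t ^ 3 * g t)) :=
        setIntegral_mono_on (h.integrable_sq_mul.const_mul 2).integrableOn
          (hfirst.add (hint.const_mul r⁻¹)) measurableSet_Ioi hpointwise
    _ = r * tailMean g 0 + (∫ t in Ioi 0, t ^ 3 * g t) / r := by
        rw [integral_add hfirst (hint.const_mul r⁻¹), integral_const_mul, integral_const_mul,
          tailMean, div_eq_inv_mul]
    _ ≤ r * tailMean g 0 + (2 * tailMean g 0 + s * (∫ t in Ioi 0, t ^ 2 * g t) +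
          halfLineDiscrepancy g τ / s) / r := by gcongr

end HalfLineSteinFactor

/-! ### Stein factors of standardised densities -/

section Reflection

variable {k : ℝ → ℝ}

theorem integrable_of_integrableOn_Ioi_neg (hk : IntegrableOn k (Ioi 0))
    (hk' : IntegrableOn (fun x => k (-x)) (Ioi 0)) : Integrable k := by
  rw [← integrableOn_univ, ← Iio_union_Ici (a := (0 : ℝ)), integrableOn_union,
    integrableOn_Ici_iff_integrableOn_Ioi]
  refine ⟨?_, hk⟩
  have := (integrable_indicator_iff measurableSet_Ioi).2 hk'
  rw [← integrable_indicator_iff measurableSet_Iio]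
  refine this.comp_neg.congr (Eventually.of_forall fun x => ?_)
  simp [indicator]

theorem integral_eq_integral_Ioi_add_neg (hk : Integrable k) :
    ∫ x, k x = (∫ x in Ioi 0, k x) + ∫ x in Ioi 0, k (-x) := by
  rw [integral_comp_neg_Ioi, neg_zero, add_comm,
    intervalIntegral.integral_Iic_add_Ioi hk.integrableOn hk.integrableOn]

theorem ae_comp_neg {p : ℝ → Prop} (hp : ∀ᵐ x, p x) : ∀ᵐ x : ℝ, p (-x) :=
  (Measure.measurePreserving_neg (volume : Measure ℝ)).quasiMeasurePreserving.ae hp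

theorem gaussianPDFReal_zero_one_neg (x : ℝ) : φ (-x) = φ x := by
  simp [gaussianPDFReal_zero_one]

theorem tailMean_comp_neg {g : ℝ → ℝ} (g1 : Integrable fun x => x * g x)
    (hmean : ∫ x, x * g x = 0) (x : ℝ) : tailMean (fun y => g (-y)) x = tailMean g (-x) := by
  have hsplit := intervalIntegral.integral_Iic_add_Ioi (b := -x) g1.integrableOn g1.integrableOn
  have hneg : ∫ y in Ioi x, y * g (-y) = -∫ y in Ioi x, -y * g (-y) := by
    rw [← integral_neg]; congr 1; funext y; ring
  rw [hmean] at hsplit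
  rw [tailMean, hneg, integral_comp_neg_Ioi (f := fun y => y * g y), tailMean]
  linarith

theorem tailMean_zero_pos {g : ℝ → ℝ} (g0 : ∀ x, 0 ≤ g x) (g1 : Integrable fun x => x * g x)
    (hmass : ∫ x, g x ≠ 0) (hmean : ∫ x, x * g x = 0) : 0 < tailMean g 0 := by
  refine (tailMean_nonneg g0 le_rfl).lt_of_ne' fun hP => hmass ?_
  have hpos := ae_eq_zero_of_tailMean_eq_zero g0 g1 le_rfl hP
  have hneg := ae_comp_neg (ae_eq_zero_of_tailMean_eq_zero (fun x => g0 (-x))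
    (by simpa using g1.comp_neg.neg) le_rfl (by rw [tailMean_comp_neg g1 hmean, neg_zero, hP]))
  refine integral_eq_zero_of_ae ?_
  filter_upwards [hpos, hneg, Measure.ae_ne volume (0 : ℝ)] with x hx hx' hx0
  rcases hx0.lt_or_gt with hlt | hgt
  · simpa using hx' (neg_pos.2 hlt)
  · exact hx hgt

end Reflection

/-- `τ` is the Stein factor of the probability density `g` of mean zero and unit variance:
`τ g = P` almost everywhere, where `P` is the tail first moment. -/
structure SteinFactor (g τ : ℝ → ℝ) : Prop where
  measurable : Measurable g
  nonneg : ∀ x, 0 ≤ g x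
  integrable : Integrable g
  integrable_sq_mul : Integrable fun x => x ^ 2 * g x
  measurable_factor : Measurable τ
  factor_mul_ae : ∀ᵐ x, τ x * g x = tailMean g x
  integrable_discrepancy : Integrable fun x => (1 - τ x) ^ 2 * g x
  integral_eq_one : ∫ x, g x = 1
  integral_id_mul : ∫ x, x * g x = 0
  integral_sq_mul : ∫ x, x ^ 2 * g x = 1

/-- The Stein discrepancy `∫ (1 - τ)² g` of a density `g` with Stein factor `τ`; it is the quantity
`Δ` of the theorem. -/
noncomputable def steinDiscrepancy (g τ : ℝ → ℝ) : ℝ := ∫ x, (1 - τ x) ^ 2 * g x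

namespace SteinFactor

variable {g τ : ℝ → ℝ}

theorem integrable_id_mul (h : SteinFactor g τ) : Integrable fun x => x * g x :=
  integrable_id_mul_of_sq h.integrable h.integrable_sq_mul

theorem tailMean_neg (h : SteinFactor g τ) (x : ℝ) :
    tailMean (fun y => g (-y)) x = tailMean g (-x) :=
  tailMean_comp_neg h.integrable_id_mul h.integral_id_mul x

theorem tailMean_neg_zero (h : SteinFactor g τ) :
    tailMean (fun y => g (-y)) 0 = tailMean g 0 := by
  rw [h.tailMean_neg, neg_zero]

theorem toHalfLine (h : SteinFactor g τ) : HalfLineSteinFactor g τ where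
  measurable := h.measurable
  nonneg := h.nonneg
  integrable := h.integrable
  integrable_sq_mul := h.integrable_sq_mul
  measurable_factor := h.measurable_factor
  factor_mul_ae := by filter_upwards [h.factor_mul_ae] with x hx _ using hx
  integrable_discrepancy := h.integrable_discrepancy
  tailMean_zero_pos := tailMean_zero_pos h.nonneg h.integrable_id_mul
    (h.integral_eq_one ▸ one_ne_zero) h.integral_id_mul

theorem toHalfLine_neg (h : SteinFactor g τ) :
    HalfLineSteinFactor (fun x => g (-x)) (fun x => τ (-x)) where
  measurable := h.measurable.comp measurable_neg
  nonneg := fun x => h.nonneg (-x)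
  integrable := h.integrable.comp_neg
  integrable_sq_mul := by simpa using h.integrable_sq_mul.comp_neg
  measurable_factor := h.measurable_factor.comp measurable_neg
  factor_mul_ae := by
    filter_upwards [ae_comp_neg h.factor_mul_ae] with x hx _
    rw [hx, h.tailMean_neg]
  integrable_discrepancy := h.integrable_discrepancy.comp_neg
  tailMean_zero_pos := by
    rw [h.tailMean_neg_zero]
    exact h.toHalfLine.tailMean_zero_pos

theorem steinDiscrepancy_nonneg (h : SteinFactor g τ) : 0 ≤ steinDiscrepancy g τ :=
  integral_nonneg fun x => mul_nonneg (sq_nonneg _) (h.nonneg x)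

theorem steinDiscrepancy_eq_add (h : SteinFactor g τ) : steinDiscrepancy g τ =
    halfLineDiscrepancy g τ + halfLineDiscrepancy (fun x => g (-x)) (fun x => τ (-x)) :=
  integral_eq_integral_Ioi_add_neg h.integrable_discrepancy

theorem tailMass_add_tailMass_neg (h : SteinFactor g τ) :
    tailMass g 0 + tailMass (fun x => g (-x)) 0 = 1 :=
  (integral_eq_integral_Ioi_add_neg h.integrable).symm.trans h.integral_eq_one

theorem integral_sq_mul_add_neg (h : SteinFactor g τ) :
    (∫ x in Ioi 0, x ^ 2 * g x) + ∫ x in Ioi 0, x ^ 2 * g (-x) = 1 := by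
  simpa only [neg_sq, h.integral_sq_mul] using
    (integral_eq_integral_Ioi_add_neg h.integrable_sq_mul).symm

theorem integral_factor_mul (h : SteinFactor g τ) : ∫ x, τ x * g x = 1 := by
  rw [integral_eq_integral_Ioi_add_neg h.toHalfLine.integrable_factor_mul,
    h.toHalfLine.integral_factor_mul, h.toHalfLine_neg.integral_factor_mul,
    h.integral_sq_mul_add_neg]

theorem integral_mul_log_tailMean_div_gaussianPDFReal_le (h : SteinFactor g τ) :
    Integrable (fun x => g x * Real.log (tailMean g x / φ x)) ∧
      ∫ x, g x * Real.log (tailMean g x / φ x) ≤ 2 * steinDiscrepancy g τ := by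
  obtain ⟨hint, hle⟩ := h.toHalfLine.integral_mul_log_tailMean_div_gaussianPDFReal_le
  obtain ⟨hint_neg, hle_neg⟩ := h.toHalfLine_neg.integral_mul_log_tailMean_div_gaussianPDFReal_le
  have hreflect (x : ℝ) : g (-x) * Real.log (tailMean (fun y => g (-y)) x / φ x) =
      g (-x) * Real.log (tailMean g (-x) / φ (-x)) := by
    rw [h.tailMean_neg, gaussianPDFReal_zero_one_neg]
  simp_rw [hreflect] at hint_neg hle_neg
  rw [h.tailMean_neg_zero] at hle_neg
  have hfull := integrable_of_integrableOn_Ioi_neg hint hint_neg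
  refine ⟨hfull, ?_⟩
  rw [integral_eq_integral_Ioi_add_neg hfull, h.steinDiscrepancy_eq_add]
  have hP0 := h.toHalfLine.tailMean_zero_pos
  have hlog := Real.log_le_sub_one_of_pos (show 0 < tailMean g 0 * √(2 * Real.pi) by positivity)
  have hmass := congrArg (· * Real.log (tailMean g 0 * √(2 * Real.pi))) h.tailMass_add_tailMass_neg
  have hsq := h.integral_sq_mul_add_neg
  simp only [add_mul, one_mul] at hmass
  linarith

theorem integral_gaussianPDFReal_zeros_le_div (h : SteinFactor g τ) :
    ∫ x, {x | g x = 0}.indicator φ x ≤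
      Real.exp 1 * (steinDiscrepancy g τ / (√(2 * Real.pi) * tailMean g 0)) := by
  have hint : Integrable ({x | g x = 0}.indicator φ) :=
    (integrable_gaussianPDFReal 0 1).indicator (h.measurable (measurableSet_singleton 0))
  have hreflect (x : ℝ) : {x | g x = 0}.indicator φ (-x) = {x | g (-x) = 0}.indicator φ x := by
    simp only [indicator, mem_ofPred_eq, gaussianPDFReal_zero_one_neg]
  have hneg := h.toHalfLine_neg.integral_gaussianPDFReal_zeros_le
  rw [h.tailMean_neg_zero] at hneg
  rw [integral_eq_integral_Ioi_add_neg hint, h.steinDiscrepancy_eq_add, add_div, mul_add]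
  simp_rw [hreflect]
  exact add_le_add h.toHalfLine.integral_gaussianPDFReal_zeros_le hneg

theorem two_le_tailMean_zero (h : SteinFactor g τ) {s r : ℝ} (hs : 0 < s) (hr : 0 < r) :
    2 ≤ 2 * r * tailMean g 0 + (4 * tailMean g 0 + s + steinDiscrepancy g τ / s) / r := by
  have hpos := h.toHalfLine.two_mul_integral_sq_mul_le hs hr
  have hneg := h.toHalfLine_neg.two_mul_integral_sq_mul_le hs hr
  rw [h.tailMean_neg_zero] at hneg
  set M := ∫ t in Ioi 0, t ^ 2 * g t
  set M' := ∫ t in Ioi 0, t ^ 2 * g (-t)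
  have hM : M + M' = 1 := h.integral_sq_mul_add_neg
  calc (2 : ℝ) = 2 * M + 2 * M' := by rw [← mul_add, hM, mul_one]
    _ ≤ _ := add_le_add hpos hneg
    _ = 2 * r * tailMean g 0 +
        (4 * tailMean g 0 + s * (M + M') + steinDiscrepancy g τ / s) / r := by
      rw [h.steinDiscrepancy_eq_add]; ring
    _ = 2 * r * tailMean g 0 + (4 * tailMean g 0 + s + steinDiscrepancy g τ / s) / r := by
      rw [hM, mul_one]

theorem le_tailMean_zero (h : SteinFactor g τ) (hΔ : steinDiscrepancy g τ ≤ 1) :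
    2 / 11 ≤ tailMean g 0 := by
  have := h.two_le_tailMean_zero (s := 1) (r := 11 / 4) (by norm_num) (by norm_num)
  linarith

theorem quarter_le_tailMean_zero (h : SteinFactor g τ) (hΔ : steinDiscrepancy g τ ≤ 1 / 4) :
    1 / 4 ≤ tailMean g 0 := by
  have := h.two_le_tailMean_zero (s := 1 / 2) (r := 2) (by norm_num) (by norm_num)
  linarith

end SteinFactor

/-! ### Entropy of a density with a Stein factor -/

theorem sub_one_sub_log_le_of_one_le {t : ℝ} (ht : 1 ≤ t) :
    t - 1 - Real.log t ≤ 1 / 2 * (1 - t) ^ 2 := by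
  have hlog := Real.le_log_one_add_of_nonneg (x := t - 1) (by linarith)
  rw [show 1 + (t - 1) = t by ring, show t - 1 + 2 = t + 1 by ring] at hlog
  have hrat : t - 1 - 2 * (t - 1) / (t + 1) ≤ 1 / 2 * (1 - t) ^ 2 := by
    rw [sub_le_iff_le_add, ← sub_le_iff_le_add', le_div_iff₀ (by linarith)]
    nlinarith [mul_nonneg (sub_nonneg.2 ht) (sq_nonneg (t - 1)), sq_nonneg (t - 1)]
  linarith

/-- The inequality `-log t ≤ sinh (-log t)`, cleared of denominators. -/
theorem sub_one_sub_log_le_of_le_one {t : ℝ} (ht : 0 < t) (ht1 : t ≤ 1) :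
    t - 1 - Real.log t ≤ (1 / 2 - Real.log t) * (1 - t) ^ 2 := by
  have hlog : 0 ≤ -Real.log t := neg_nonneg.2 (Real.log_nonpos ht.le ht1)
  have hsinh := Real.self_le_sinh_iff.2 hlog
  rw [Real.sinh_eq, neg_neg, Real.exp_neg, Real.exp_log ht] at hsinh
  have hcleared : -Real.log t * (2 * t) ≤ 1 - t ^ 2 :=
    (mul_le_mul_of_nonneg_right hsinh (by positivity)).trans_eq (by field_simp)
  nlinarith [mul_nonneg (sq_nonneg t) hlog]

theorem sub_one_sub_log_le_add_posLog {t v : ℝ} (ht : 0 < t) (hv : 0 < v) (hv1 : v ≤ 1) :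
    t - 1 - Real.log t ≤
      (1 / 2 + Real.log (1 / v)) * (1 - t) ^ 2 + Real.posLog (v / t) := by
  have hlogv : 0 ≤ Real.log (1 / v) := Real.log_nonneg ((one_le_div hv).2 hv1)
  have hpos : 0 ≤ Real.posLog (v / t) := Real.posLog_nonneg
  rcases le_total 1 t with ht1 | ht1
  · nlinarith [sub_one_sub_log_le_of_one_le ht1, mul_nonneg hlogv (sq_nonneg (1 - t))]
  · have hsplit : -Real.log t = Real.log (1 / v) + Real.log (v / t) := by
      rw [← Real.log_mul (by positivity) (by positivity), ← Real.log_inv]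
      congr 1
      field_simp
    have htrunc : Real.log (v / t) * (1 - t) ^ 2 ≤ Real.posLog (v / t) := by
      calc Real.log (v / t) * (1 - t) ^ 2 ≤ Real.posLog (v / t) * (1 - t) ^ 2 := by
            gcongr; exact le_max_right _ _
        _ ≤ Real.posLog (v / t) := mul_le_of_le_one_right hpos (by nlinarith)
    have hle := sub_one_sub_log_le_of_le_one ht ht1
    rw [sub_eq_add_neg (1 / 2 : ℝ), hsplit] at hle
    linarith

/-- For `t ≤ 0` the conclusion is trivial, so the junk values of the logarithm do no harm. -/
theorem lt_mul_exp_neg_of_lt_posLog {s t v : ℝ} (hs : 0 ≤ s) (hv : 0 < v)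
    (h : s < Real.posLog (v / t)) : t < v * Real.exp (-s) := by
  rcases le_or_gt t 0 with ht | ht
  · exact ht.trans_lt (by positivity)
  · have hlog : s < Real.log (v / t) := (lt_max_iff.1 h).resolve_left hs.not_gt
    rw [Real.lt_log_iff_exp_lt (div_pos hv ht), lt_div_iff₀ ht] at hlog
    rw [Real.exp_neg, ← div_eq_mul_inv, lt_div_iff₀ (Real.exp_pos s)]
    linarith

theorem lintegral_posLog_div_le {Ω : Type*} [MeasurableSpace Ω] (μ : Measure Ω) {X : Ω → ℝ}
    (hX : Measurable X) {C β v : ℝ} (hC : 0 ≤ C) (hβ : 0 < β) (hv : 0 < v)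
    (h : ∀ u ∈ Ioc 0 v, μ {ω | X ω < u} ≤ ENNReal.ofReal (C * u ^ β)) :
    ∫⁻ ω, ENNReal.ofReal (Real.posLog (v / X ω)) ∂μ ≤ ENNReal.ofReal (C * v ^ β / β) := by
  have htail : ∀ s ∈ Ioi (0 : ℝ), μ {ω | s < Real.posLog (v / X ω)} ≤
      ENNReal.ofReal (C * v ^ β * Real.exp (-β * s)) := by
    intro s (hs : 0 < s)
    have hu : v * Real.exp (-s) ∈ Ioc 0 v :=
      ⟨by positivity, mul_le_of_le_one_right hv.le (Real.exp_le_one_iff.2 (by linarith))⟩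
    refine (measure_mono fun ω hω => lt_mul_exp_neg_of_lt_posLog hs.le hv hω).trans
      ((h _ hu).trans_eq ?_)
    rw [Real.mul_rpow hv.le (Real.exp_pos _).le, ← Real.exp_mul, mul_assoc]
    ring_nf
  have hint : IntegrableOn (fun s => C * v ^ β * Real.exp (-β * s)) (Ioi 0) :=
    (exp_neg_integrableOn_Ioi 0 hβ).const_mul _
  rw [lintegral_eq_lintegral_meas_lt _ (Eventually.of_forall fun _ => Real.posLog_nonneg)
    (by unfold Real.posLog; fun_prop)]
  refine (setLIntegral_mono' measurableSet_Ioi htail).trans_eq ?_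
  rw [← ofReal_integral_eq_lintegral_ofReal hint (Eventually.of_forall fun s => by positivity),
    integral_const_mul, integral_exp_mul_Ioi (by linarith) 0]
  simp only [mul_zero, Real.exp_zero, neg_div_neg_eq]
  rw [← mul_div_assoc, mul_one]

namespace SteinFactor

variable {g τ : ℝ → ℝ}

theorem factor_pos_ae (h : SteinFactor g τ) :
    ∀ᵐ x, g x ≠ 0 → 0 < τ x ∧ 0 < tailMean g x := by
  filter_upwards [ae_tailMean_pos h.nonneg h.integrable_id_mul,
    ae_comp_neg (ae_tailMean_pos h.toHalfLine_neg.nonneg h.toHalfLine_neg.integrable_id_mul),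
    h.factor_mul_ae, Measure.ae_ne volume (0 : ℝ)] with x hpos hneg hfactor hx hgx
  have hP : 0 < tailMean g x := by
    rcases hx.lt_or_gt with hlt | hgt
    · simpa only [h.tailMean_neg, neg_neg] using hneg (neg_pos.2 hlt) (by rwa [neg_neg])
    · exact hpos hgt hgx
  exact ⟨pos_of_mul_pos_left (hP.trans_eq hfactor.symm) (h.nonneg x), hP⟩

theorem withDensity_factor_lt_le (h : SteinFactor g τ) {κ α : ℝ} (hκ : 0 ≤ κ)
    (hμ : IsTVRegular (volume.withDensity fun x => ENNReal.ofReal (g x)) κ α)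
    (hΔ : steinDiscrepancy g τ ≤ 1) {v : ℝ} (hv : 0 < v) (hv1 : v ≤ 1 / 13) :
    volume.withDensity (fun x => ENNReal.ofReal (g x)) {y | τ y < v} ≤
      ENNReal.ofReal (233 * κ * v ^ min 1 (2 * α)) := by
  set μ := volume.withDensity fun x => ENNReal.ofReal (g x)
  have hneg_eq := withDensity_comp_neg fun x => ENNReal.ofReal (g x)
  have hmass := h.tailMass_add_tailMass_neg
  have hmass_nonneg := tailMass_nonneg h.nonneg 0
  have hmass_neg_nonneg := tailMass_nonneg h.toHalfLine_neg.nonneg 0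
  have hmean := h.le_tailMean_zero hΔ
  have hpos := h.toHalfLine.withDensity_factor_lt_le hκ hμ (by linarith) hmean hv hv1
  have hneg := h.toHalfLine_neg.withDensity_factor_lt_le hκ (hneg_eq ▸ hμ.map_neg) (by linarith)
    (h.tailMean_neg_zero ▸ hmean) hv hv1
  have hmeas : MeasurableSet {y | 0 < y ∧ τ (-y) < v} :=
    (measurableSet_lt measurable_const measurable_id).inter
      (measurableSet_lt (h.measurable_factor.comp measurable_neg) measurable_const)
  rw [hneg_eq, Measure.map_apply measurable_neg hmeas] at hneg
  have hcover : {y | τ y < v} ≤ᵐ[μ]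
      ({y | 0 < y ∧ τ y < v} ∪ Neg.neg ⁻¹' {y | 0 < y ∧ τ (-y) < v} : Set ℝ) := by
    refine (withDensity_absolutelyContinuous _ _).ae_le ?_
    filter_upwards [Measure.ae_ne volume (0 : ℝ)] with y hy (hτ : τ y < v)
    rcases hy.lt_or_gt with hlt | hgt
    · exact Or.inr ⟨neg_pos.2 hlt, by rwa [neg_neg]⟩
    · exact Or.inl ⟨hgt, hτ⟩
  refine (measure_mono_ae hcover).trans ((measure_union_le _ _).trans
    ((add_le_add hpos hneg).trans_eq ?_))
  rw [← ENNReal.ofReal_add (by positivity) (by positivity)]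
  ring_nf

section Regular

variable (h : SteinFactor g τ) {κ α : ℝ} (hκ : 0 ≤ κ) (hα : 0 < α)
  (hμ : IsTVRegular (volume.withDensity fun x => ENNReal.ofReal (g x)) κ α)
  (hΔ : steinDiscrepancy g τ ≤ 1) {v : ℝ} (hv : 0 < v) (hv1 : v ≤ 1 / 13)

include h hκ hα hμ hΔ hv hv1

theorem integral_mul_posLog_le :
    Integrable (fun x => g x * Real.posLog (v / τ x)) ∧ ∫ x, g x * Real.posLog (v / τ x) ≤
      233 * κ * v ^ min 1 (2 * α) / min 1 (2 * α) := by
  have hβ : 0 < min 1 (2 * α) := lt_min one_pos (by positivity)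
  have gm := h.measurable
  have hposLog : Measurable fun x => Real.posLog (v / τ x) := by
    have := h.measurable_factor
    unfold Real.posLog
    fun_prop
  have hnonneg : ∀ᵐ x, 0 ≤ g x * Real.posLog (v / τ x) :=
    Eventually.of_forall fun x => mul_nonneg (h.nonneg x) Real.posLog_nonneg
  have hlint : ∫⁻ x, ENNReal.ofReal (g x * Real.posLog (v / τ x)) ≤
      ENNReal.ofReal (233 * κ * v ^ min 1 (2 * α) / min 1 (2 * α)) := by
    have hlayer := lintegral_posLog_div_le _ h.measurable_factor (by positivity) hβ hv
      fun u hu => h.withDensity_factor_lt_le hκ hμ hΔ hu.1 (hu.2.trans hv1)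
    rw [lintegral_withDensity_eq_lintegral_mul _ gm.ennreal_ofReal hposLog.ennreal_ofReal] at hlayer
    simpa only [Pi.mul_apply, ← ENNReal.ofReal_mul (h.nonneg _)] using hlayer
  have hint : Integrable fun x => g x * Real.posLog (v / τ x) := by
    refine ⟨(gm.mul hposLog).aestronglyMeasurable, ?_⟩
    rw [hasFiniteIntegral_iff_ofReal hnonneg]
    exact hlint.trans_lt ENNReal.ofReal_lt_top
  refine ⟨hint, ?_⟩
  rw [integral_eq_lintegral_of_nonneg_ae hnonneg hint.1]
  exact ENNReal.toReal_le_of_le_ofReal (by positivity) hlint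

theorem integral_mul_factor_sub_one_sub_log_le :
    Integrable (fun x => g x * (τ x - 1 - Real.log (τ x))) ∧
      ∫ x, g x * (τ x - 1 - Real.log (τ x)) ≤ (1 / 2 + Real.log (1 / v)) * steinDiscrepancy g τ +
        233 * κ * v ^ min 1 (2 * α) / min 1 (2 * α) := by
  obtain ⟨hint_log, hlog_le⟩ := h.integral_mul_posLog_le hκ hα hμ hΔ hv hv1
  have gm := h.measurable
  have τm := h.measurable_factor
  have hsq := h.integrable_discrepancy.const_mul (1 / 2 + Real.log (1 / v))
  have hbound : ∀ᵐ x, 0 ≤ g x * (τ x - 1 - Real.log (τ x)) ∧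
      g x * (τ x - 1 - Real.log (τ x)) ≤
        (1 / 2 + Real.log (1 / v)) * ((1 - τ x) ^ 2 * g x) + g x * Real.posLog (v / τ x) := by
    filter_upwards [h.factor_pos_ae] with x hx
    by_cases hgx : g x = 0
    · simp only [hgx, zero_mul, mul_zero, add_zero, le_refl, and_self]
    · obtain ⟨hτ, -⟩ := hx hgx
      refine ⟨mul_nonneg (h.nonneg x) (by linarith [Real.log_le_sub_one_of_pos hτ]), ?_⟩
      have := mul_le_mul_of_nonneg_left
        (sub_one_sub_log_le_add_posLog hτ hv (by linarith)) (h.nonneg x)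
      linarith
  have hint : Integrable fun x => g x * (τ x - 1 - Real.log (τ x)) := by
    refine (hsq.add hint_log).mono' (by fun_prop) ?_
    filter_upwards [hbound] with x hx
    rw [Real.norm_of_nonneg hx.1]
    exact hx.2
  refine ⟨hint, ?_⟩
  calc ∫ x, g x * (τ x - 1 - Real.log (τ x))
      ≤ ∫ x, ((1 / 2 + Real.log (1 / v)) * ((1 - τ x) ^ 2 * g x) +
          g x * Real.posLog (v / τ x)) :=
        integral_mono_ae hint (hsq.add hint_log) (hbound.mono fun x hx => hx.2)
    _ ≤ _ := by
        rw [integral_add hsq hint_log, integral_const_mul, steinDiscrepancy]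
        gcongr

/-- Decompose `log (g / φ) = log (P / φ) - log τ` and use `∫ τ g = ∫ g`. -/
theorem integral_mul_log_div_gaussianPDFReal_le :
    Integrable (fun x => g x * Real.log (g x / φ x)) ∧
      ∫ x, g x * Real.log (g x / φ x) ≤ (5 / 2 + Real.log (1 / v)) * steinDiscrepancy g τ +
        233 * κ * v ^ min 1 (2 * α) / min 1 (2 * α) := by
  obtain ⟨hint_P, hP_le⟩ := h.integral_mul_log_tailMean_div_gaussianPDFReal_le
  obtain ⟨hint_τ, hτ_le⟩ := h.integral_mul_factor_sub_one_sub_log_le hκ hα hμ hΔ hv hv1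
  have hint_mul := h.toHalfLine.integrable_factor_mul
  have hint_sub : Integrable fun x => g x - τ x * g x := h.integrable.sub hint_mul
  have hint_add : Integrable fun x => g x * Real.log (tailMean g x / φ x) +
      g x * (τ x - 1 - Real.log (τ x)) := hint_P.add hint_τ
  have hdecomp : (fun x => g x * Real.log (g x / φ x)) =ᵐ[volume] fun x =>
      g x * Real.log (tailMean g x / φ x) + g x * (τ x - 1 - Real.log (τ x)) +
        (g x - τ x * g x) := by
    filter_upwards [h.factor_pos_ae, h.factor_mul_ae] with x hpos hfactor
    by_cases hgx : g x = 0
    · simp only [hgx, zero_mul, mul_zero, add_zero, sub_zero]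
    · obtain ⟨hτ, hP⟩ := hpos hgx
      have hφ := gaussianPDFReal_zero_one_pos x
      rw [Real.log_div hgx hφ.ne', Real.log_div hP.ne' hφ.ne', ← hfactor, Real.log_mul hτ.ne' hgx]
      ring
  refine ⟨(hint_add.add hint_sub).congr hdecomp.symm, ?_⟩
  rw [integral_congr_ae hdecomp, integral_add hint_add hint_sub,
    integral_add hint_P hint_τ, integral_sub h.integrable hint_mul, h.integral_eq_one,
    h.integral_factor_mul]
  linarith

end Regular

theorem integral_gaussianPDFReal_zeros_le (h : SteinFactor g τ) :
    (Real.exp 1)⁻¹ * ∫ x, {x | g x = 0}.indicator φ x ≤ 8 / 5 * steinDiscrepancy g τ := by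
  have hΔ := h.steinDiscrepancy_nonneg
  rw [inv_mul_le_iff₀ (Real.exp_pos 1)]
  rcases le_or_gt (steinDiscrepancy g τ) (1 / 4) with hsmall | hlarge
  · refine h.integral_gaussianPDFReal_zeros_le_div.trans
      (mul_le_mul_of_nonneg_left ?_ (Real.exp_pos 1).le)
    have hP0 := h.quarter_le_tailMean_zero hsmall
    have hpi : 5 / 2 ≤ √(2 * Real.pi) := Real.le_sqrt_of_sq_le (by linarith [Real.pi_gt_d4])
    have hden : 5 / 8 ≤ √(2 * Real.pi) * tailMean g 0 := by nlinarith
    rw [div_le_iff₀ (by linarith)]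
    nlinarith
  · have hle_one : ∫ x, {x | g x = 0}.indicator φ x ≤ 1 :=
      (integral_gaussianPDFReal_eq_one 0 one_ne_zero).le.trans' <| integral_mono_of_nonneg
        (Eventually.of_forall fun x =>
          indicator_nonneg (fun y _ => gaussianPDFReal_nonneg 0 1 y) x)
        (integrable_gaussianPDFReal 0 1)
        (Eventually.of_forall fun x =>
          indicator_le_self' (fun y _ => gaussianPDFReal_nonneg 0 1 y) x)
    nlinarith [Real.exp_one_gt_d9]

end SteinFactor

/-! ### From the weak Stein identity to `τ g = P` -/

section WeakStein

open scoped ContDiff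

theorem integral_mul_integral_Iio {a b : ℝ → ℝ} (ha : Integrable a) (hb : Integrable b) :
    ∫ x, b x * ∫ y in Iio x, a y = ∫ y, a y * ∫ x in Ioi y, b x := by
  have hint : Integrable (Function.uncurry fun x y => (Iio x).indicator (fun y => b x * a y) y)
      (volume.prod volume) :=
    (hb.mul_prod ha).indicator (measurableSet_lt measurable_snd measurable_fst)
  calc ∫ x, b x * ∫ y in Iio x, a y
      = ∫ x, ∫ y, (Iio x).indicator (fun y => b x * a y) y := by
        simp only [integral_indicator measurableSet_Iio, integral_const_mul]
    _ = ∫ y, ∫ x, (Ioi y).indicator (fun x => b x * a y) x := integral_integral_swap hint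
    _ = ∫ y, a y * ∫ x in Ioi y, b x := by
        simp only [integral_indicator measurableSet_Ioi, integral_mul_const, mul_comm (a _)]

theorem hasDerivAt_integral_Iio {ψ : ℝ → ℝ} (hi : Integrable ψ) (hc : Continuous ψ) (x : ℝ) :
    HasDerivAt (fun x => ∫ y in Iio x, ψ y) (ψ x) x := by
  have hprim : (fun x => ∫ y in Iio x, ψ y) =
      fun x => (∫ y in Iio 0, ψ y) + ∫ y in (0 : ℝ)..x, ψ y := by
    funext x
    simp only [← integral_Iic_eq_integral_Iio]
    rw [← intervalIntegral.integral_Iic_sub_Iic hi.integrableOn hi.integrableOn]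
    ring
  rw [hprim]
  exact (intervalIntegral.integral_hasDerivAt_right hi.intervalIntegrable
    (hc.stronglyMeasurableAtFilter _ _) hc.continuousAt).const_add _

theorem hasCompactSupport_integral_Iio {ψ : ℝ → ℝ} (hc : HasCompactSupport ψ)
    (h0 : ∫ x, ψ x = 0) : HasCompactSupport fun x => ∫ y in Iio x, ψ y := by
  obtain ⟨R, hR⟩ := hc.isCompact.isBounded.subset_closedBall 0
  rw [Real.closedBall_eq_Icc, zero_sub, zero_add] at hR
  have hzero (y : ℝ) (hy : y ∉ Icc (-R) R) : ψ y = 0 :=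
    image_eq_zero_of_notMem_tsupport fun hy' => hy (hR hy')
  refine HasCompactSupport.intro (isCompact_Icc (a := -R) (b := R)) fun x hx => ?_
  rcases lt_or_ge x (-R) with hleft | hge
  · exact setIntegral_eq_zero_of_forall_eq_zero fun y hy =>
      hzero y fun hyR => (hleft.trans_le hyR.1).not_gt hy
  · have hright : R < x := lt_of_not_ge fun hxR => hx ⟨hge, hxR⟩
    rw [setIntegral_eq_integral_of_forall_compl_eq_zero, h0]
    exact fun y hy => hzero y fun hyR => hy (hyR.2.trans_lt hright)

/-- The du Bois-Reymond lemma. -/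
theorem exists_ae_eq_const_of_integral_contDiff_mul_eq_zero {w : ℝ → ℝ} (hw : LocallyIntegrable w)
    (h : ∀ ψ : ℝ → ℝ, ContDiff ℝ ∞ ψ → HasCompactSupport ψ → ∫ x, ψ x = 0 →
      ∫ x, ψ x * w x = 0) : ∃ c, ∀ᵐ x, w x = c := by
  let bump : ContDiffBump (0 : ℝ) := ⟨1, 2, one_pos, one_lt_two⟩
  let χ : ℝ → ℝ := bump.normed volume
  have hχ : ContDiff ℝ ∞ χ := bump.contDiff_normed
  have hχc : HasCompactSupport χ := bump.hasCompactSupport_normed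
  have hχi : Integrable χ := bump.integrable_normed
  have hχw : Integrable fun x => χ x * w x :=
    hw.integrable_smul_left_of_hasCompactSupport hχ.continuous hχc
  refine ⟨∫ x, χ x * w x, ?_⟩
  suffices hsub : ∀ᵐ x, w x - ∫ x, χ x * w x = 0 from hsub.mono fun x hx => sub_eq_zero.1 hx
  refine ae_eq_zero_of_integral_contDiff_smul_eq_zero (hw.sub (locallyIntegrable_const _))
    fun ψ hψ hψc => ?_
  have hψi : Integrable ψ := hψ.continuous.integrable_of_hasCompactSupport hψc
  have hψw : Integrable fun x => ψ x * w x :=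
    hw.integrable_smul_left_of_hasCompactSupport hψ.continuous hψc
  have hmean : ∫ x, (ψ x - (∫ y, ψ y) * χ x) = 0 := by
    rw [integral_sub hψi (hχi.const_mul _), integral_const_mul, bump.integral_normed, mul_one,
      sub_self]
  have htest := h (fun x => ψ x - (∫ y, ψ y) * χ x) (hψ.sub (contDiff_const.mul hχ))
    (hψc.sub hχc.mul_left) hmean
  simp only [sub_mul, mul_assoc] at htest
  simp only [smul_eq_mul, mul_sub]
  rw [integral_sub hψw (hχw.const_mul _), integral_const_mul] at htest
  rw [integral_sub hψw (hψi.mul_const _), integral_mul_const, htest]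

theorem integrableOn_tailMean {g : ℝ → ℝ} (gm : Measurable g) (g0 : ∀ x, 0 ≤ g x)
    (g1 : Integrable fun x => x * g x) (g2 : Integrable fun x => x ^ 2 * g x) :
    IntegrableOn (tailMean g) (Ioi 0) := by
  refine ⟨(continuous_tailMean g1).aestronglyMeasurable, ?_⟩
  have hnonneg : ∀ᵐ y ∂volume.restrict (Ioi (0 : ℝ)), 0 ≤ tailMean g y :=
    (ae_restrict_iff' measurableSet_Ioi).2
      (Eventually.of_forall fun y hy => tailMean_nonneg g0 (le_of_lt hy))
  have htail : ∀ y ∈ Ioi (0 : ℝ),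
      ENNReal.ofReal (tailMean g y) = 1 * ∫⁻ t in Ioi y, ENNReal.ofReal (t * g t) := fun y hy => by
    rw [one_mul, tailMean, ofReal_integral_eq_lintegral_ofReal g1.integrableOn]
    exact (ae_restrict_iff' measurableSet_Ioi).2 (Eventually.of_forall fun t ht =>
      mul_nonneg (le_of_lt (lt_trans hy ht)) (g0 t))
  rw [hasFiniteIntegral_iff_ofReal hnonneg, setLIntegral_congr_fun measurableSet_Ioi htail,
    lintegral_Ioi_mul_lintegral_Ioi measurable_const (by fun_prop)]
  refine lt_of_le_of_lt ?_ g2.lintegral_lt_top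
  refine (setLIntegral_mono' measurableSet_Ioi fun t (ht : 0 < t) => ?_).trans
    (setLIntegral_le_lintegral (Ioi 0) _)
  simp only [lintegral_const, one_mul, Measure.restrict_apply_univ, Real.volume_Ioo, sub_zero]
  rw [← ENNReal.ofReal_mul (mul_nonneg ht.le (g0 t))]
  exact ENNReal.ofReal_le_ofReal (by ring_nf; rfl)

theorem integral_mul_factor_mul_sub_tailMean_eq_zero {g τ ψ : ℝ → ℝ}
    (g1 : Integrable fun x => x * g x) (hτ : Integrable fun x => τ x * g x)
    (hstein : ∀ u : ℝ → ℝ, ContDiff ℝ 1 u → HasCompactSupport u →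
      ∫ x, x * u x * g x = ∫ x, τ x * deriv u x * g x)
    (hψ : Continuous ψ) (hψc : HasCompactSupport ψ) (hmean : ∫ x, ψ x = 0) :
    ∫ x, ψ x * (τ x * g x - tailMean g x) = 0 := by
  have hψi : Integrable ψ := hψ.integrable_of_hasCompactSupport hψc
  have hderiv := hasDerivAt_integral_Iio hψi hψ
  have hderiv_eq : deriv (fun x => ∫ y in Iio x, ψ y) = ψ := funext fun x => (hderiv x).deriv
  have hprim := hstein (fun x => ∫ y in Iio x, ψ y)
    (contDiff_one_iff_deriv.2 ⟨fun x => (hderiv x).differentiableAt, by rwa [hderiv_eq]⟩)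
    (hasCompactSupport_integral_Iio hψc hmean)
  have hfubini := integral_mul_integral_Iio hψi g1
  have hint_P : Integrable fun x => ψ x * tailMean g x :=
    (hψ.mul (continuous_tailMean g1)).integrable_of_hasCompactSupport hψc.mul_right
  have hint_τ : Integrable fun x => ψ x * (τ x * g x) := by
    obtain ⟨C, hC⟩ := hψ.bounded_above_of_compact_support hψc
    exact hτ.bdd_mul hψ.aestronglyMeasurable (Eventually.of_forall hC)
  simp only [mul_sub]
  rw [integral_sub hint_τ hint_P, sub_eq_zero]
  calc ∫ x, ψ x * (τ x * g x)
      = ∫ x, τ x * deriv (fun x => ∫ y in Iio x, ψ y) x * g x := by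
        rw [hderiv_eq]
        exact integral_congr_ae (Eventually.of_forall fun x => by ring)
    _ = ∫ x, x * g x * ∫ y in Iio x, ψ y := by
        rw [← hprim]
        exact integral_congr_ae (Eventually.of_forall fun x => by ring)
    _ = ∫ x, ψ x * tailMean g x := hfubini

theorem ae_factor_mul_eq_tailMean {g τ : ℝ → ℝ} (gm : Measurable g) (g0 : ∀ x, 0 ≤ g x)
    (g1 : Integrable fun x => x * g x) (g2 : Integrable fun x => x ^ 2 * g x)
    (hτ : Integrable fun x => τ x * g x)
    (hstein : ∀ u : ℝ → ℝ, ContDiff ℝ 1 u → HasCompactSupport u →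
      ∫ x, x * u x * g x = ∫ x, τ x * deriv u x * g x) :
    ∀ᵐ x, τ x * g x = tailMean g x := by
  obtain ⟨c, hc⟩ := exists_ae_eq_const_of_integral_contDiff_mul_eq_zero
    (hτ.locallyIntegrable.sub (continuous_tailMean g1).locallyIntegrable)
    fun ψ hψ => integral_mul_factor_mul_sub_tailMean_eq_zero g1 hτ hstein hψ.continuous
  have hint : IntegrableOn (fun _ : ℝ => c) (Ioi 0) :=
    (hτ.integrableOn.sub (integrableOn_tailMean gm g0 g1 g2)).congr (ae_restrict_of_ae hc)
  have hc0 : c = 0 := by simpa [integrableOn_const_iff] using hint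
  filter_upwards [hc] with x hx
  exact sub_eq_zero.1 (hx.trans hc0)

end WeakStein

/-! ### Laws with a density -/

section Law

variable {Ω : Type*} [MeasurableSpace Ω] {μ : Measure Ω} {X : Ω → ℝ} {g : ℝ → ℝ}

section Transfer

variable (hX : Measurable X) (gm : Measurable g) (g0 : ∀ x, 0 ≤ g x)
  (hlaw : μ.map X = volume.withDensity fun x => ENNReal.ofReal (g x)) {k : ℝ → ℝ}
  (hk : Measurable k)

include hX gm g0 hlaw hk

theorem integral_comp_eq_integral_mul : ∫ ω, k (X ω) ∂μ = ∫ x, k x * g x := by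
  rw [← integral_map hX.aemeasurable hk.aestronglyMeasurable, hlaw,
    integral_withDensity_eq_integral_toReal_smul gm.ennreal_ofReal
      (Eventually.of_forall fun x => ENNReal.ofReal_lt_top)]
  simp only [ENNReal.toReal_ofReal (g0 _), smul_eq_mul, mul_comm]

theorem integrable_comp_iff_integrable_mul :
    Integrable (fun ω => k (X ω)) μ ↔ Integrable fun x => k x * g x := by
  have hmap := integrable_map_measure (μ := μ) hk.aestronglyMeasurable hX.aemeasurable
  rw [hlaw, integrable_withDensity_iff_integrable_smul' gm.ennreal_ofReal
    (Eventually.of_forall fun x => ENNReal.ofReal_lt_top)] at hmap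
  simpa only [ENNReal.toReal_ofReal (g0 _), smul_eq_mul, mul_comm, Function.comp_def]
    using hmap.symm

end Transfer

theorem SteinFactor.of_map_eq [IsProbabilityMeasure μ] {τ : ℝ → ℝ} (hX : Measurable X)
    (gm : Measurable g) (g0 : ∀ x, 0 ≤ g x)
    (hlaw : μ.map X = volume.withDensity fun x => ENNReal.ofReal (g x))
    (hmean : ∫ ω, X ω ∂μ = 0) (hvar : ∫ ω, X ω ^ 2 ∂μ = 1) (τm : Measurable τ)
    (hτ : Integrable (fun ω => (1 - τ (X ω)) ^ 2) μ)
    (hstein : ∀ u : ℝ → ℝ, ContDiff ℝ 1 u → HasCompactSupport u →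
      ∫ ω, X ω * u (X ω) ∂μ = ∫ ω, τ (X ω) * deriv u (X ω) ∂μ) : SteinFactor g τ := by
  have integral_eq {k : ℝ → ℝ} (hk : Measurable k) : ∫ ω, k (X ω) ∂μ = ∫ x, k x * g x :=
    integral_comp_eq_integral_mul hX gm g0 hlaw hk
  have integrable_of {k : ℝ → ℝ} (hk : Measurable k) (hi : Integrable (fun ω => k (X ω)) μ) :
      Integrable fun x => k x * g x := (integrable_comp_iff_integrable_mul hX gm g0 hlaw hk).1 hi
  have gi : Integrable g := by
    simpa only [one_mul] using integrable_of (k := fun _ => 1) measurable_const (integrable_const 1)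
  have g2 : Integrable fun x => x ^ 2 * g x := integrable_of (k := fun x => x ^ 2) (by fun_prop)
    (Integrable.of_integral_ne_zero (hvar.trans_ne one_ne_zero))
  have hdisc : Integrable fun x => (1 - τ x) ^ 2 * g x :=
    integrable_of (k := fun x => (1 - τ x) ^ 2) (by fun_prop) hτ
  have hτg : Integrable fun x => τ x * g x := by
    refine ((gi.const_mul 2).add hdisc).mono' (by fun_prop) (Eventually.of_forall fun x => ?_)
    have habs : |τ x| ≤ 2 + (1 - τ x) ^ 2 := by
      rcases abs_cases (τ x) with hx | hx <;> nlinarith [sq_nonneg (τ x)]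
    rw [norm_mul, Real.norm_eq_abs, Real.norm_of_nonneg (g0 x), Pi.add_apply, ← add_mul]
    exact mul_le_mul_of_nonneg_right habs (g0 x)
  refine ⟨gm, g0, gi, g2, τm, ?_, hdisc, ?_, ?_, ?_⟩
  · refine ae_factor_mul_eq_tailMean gm g0 (integrable_id_mul_of_sq gi g2) g2 hτg fun u hu huc => ?_
    have um := hu.continuous.measurable
    rw [← integral_eq (k := fun x => x * u x) (by fun_prop),
      ← integral_eq (k := fun x => τ x * deriv u x) (τm.mul (measurable_deriv u))]
    exact hstein u hu huc
  · simpa using (integral_eq (k := fun _ => 1) measurable_const).symm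
  · rw [← integral_eq (k := fun x => x) measurable_id, hmean]
  · rw [← integral_eq (k := fun x => x ^ 2) (by fun_prop), hvar]

end Law

theorem measure_le_add_of_tvDist_le {μ ν : Measure ℝ} [IsProbabilityMeasure μ]
    [IsProbabilityMeasure ν] {A : Set ℝ} (hA : MeasurableSet A) {B : ℝ} (h : tvDist μ ν ≤ B) :
    ν A ≤ μ A + ENNReal.ofReal B := by
  have hbdd : BddAbove {r : ℝ | ∃ s, MeasurableSet s ∧ r = |(μ s).toReal - (ν s).toReal|} := by
    refine ⟨1, ?_⟩
    rintro r ⟨s, -, rfl⟩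
    exact abs_sub_le_of_nonneg_of_le measureReal_nonneg measureReal_le_one measureReal_nonneg
      measureReal_le_one
  have habs : |(μ A).toReal - (ν A).toReal| ≤ B := (le_csSup hbdd ⟨A, hA, rfl⟩).trans h
  rw [← ENNReal.ofReal_toReal (measure_ne_top ν A), ← ENNReal.ofReal_toReal (measure_ne_top μ A)]
  refine (ENNReal.ofReal_le_ofReal ?_).trans ENNReal.ofReal_add_le
  linarith [(abs_le.1 habs).1]

theorem isTVRegular_of_tvDist_map_le {μ : Measure ℝ} [IsProbabilityMeasure μ] {κ α : ℝ}
    (h : ∀ x : ℝ, ∀ t ∈ Ioc (0 : ℝ) 1, tvDist (μ.map fun y => √t * y + √(1 - t) * x) μ ≤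
      κ * (1 + |x|) * t⁻¹ * (1 - t) ^ α) : IsTVRegular μ κ α := by
  intro x t ht A hA
  have hmeas : Measurable fun y : ℝ => √t * y + √(1 - t) * x := by fun_prop
  have := Measure.isProbabilityMeasure_map (μ := μ) hmeas.aemeasurable
  have hle := measure_le_add_of_tvDist_le hA (h x t ht)
  rwa [Measure.map_apply hmeas hA] at hle

/-! ### Moments -/

theorem integrable_one_sub_sq_of_integrable_rpow {Ω : Type*} [MeasurableSpace Ω] {μ : Measure Ω}
    [IsFiniteMeasure μ] {X : Ω → ℝ} (hX : AEStronglyMeasurable X μ) {p : ℝ} (hp : 2 ≤ p)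
    (h : Integrable (fun ω => |X ω| ^ p) μ) : Integrable (fun ω => (1 - X ω) ^ 2) μ := by
  have hp0 : 0 < p := by linarith
  have hLp : MemLp X (ENNReal.ofReal p) μ := by
    refine (integrable_norm_rpow_iff hX (by simpa) ENNReal.ofReal_ne_top).1 ?_
    simpa only [ENNReal.toReal_ofReal hp0.le, Real.norm_eq_abs] using h
  have hL2 : MemLp X 2 μ := hLp.mono_exponent (by simpa using ENNReal.ofReal_le_ofReal hp)
  exact ((memLp_const 1).sub hL2).integrable_sq

theorem one_le_integral_abs_rpow {Ω : Type*} [MeasurableSpace Ω] {μ : Measure Ω}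
    [IsProbabilityMeasure μ] {X : Ω → ℝ} (hX : ∫ ω, X ω ∂μ = 1) {p : ℝ} (hp : 1 ≤ p)
    (h : Integrable (fun ω => |X ω| ^ p) μ) : 1 ≤ ∫ ω, |X ω| ^ p ∂μ := by
  have hXi : Integrable X μ := Integrable.of_integral_ne_zero (hX.trans_ne one_ne_zero)
  have habs : 1 ≤ ∫ ω, |X ω| ∂μ :=
    hX.symm.trans_le (integral_mono hXi hXi.abs fun ω => le_abs_self (X ω))
  have hjensen : (∫ ω, |X ω| ∂μ) ^ p ≤ ∫ ω, |X ω| ^ p ∂μ :=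
    (convexOn_rpow hp).map_integral_le
      (Real.continuous_rpow_const (by linarith)).continuousOn isClosed_Ici
      (Eventually.of_forall fun ω => abs_nonneg (X ω)) hXi.abs h
  exact (Real.one_le_rpow habs (by linarith)).trans hjensen

theorem one_le_integral_abs_rpow_gaussianReal {p : ℝ} (hp : 2 ≤ p) :
    1 ≤ ∫ x, |x| ^ p ∂gaussianReal 0 1 := by
  have hsq : ∫ x, x ^ 2 ∂gaussianReal 0 1 = 1 := by
    have hvar := variance_id_gaussianReal (μ := 0) (v := 1)
    rwa [variance_of_integral_eq_zero aemeasurable_id (by simp)] at hvar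
  have hpow (x : ℝ) : |x| ^ p = |x ^ 2| ^ (p / 2) := by
    rw [abs_pow, ← Real.rpow_natCast_mul (abs_nonneg x)]
    congr 1
    push_cast
    ring
  have hint : Integrable (fun x : ℝ => |x| ^ p) (gaussianReal 0 1) := by
    have hLp := memLp_id_gaussianReal (μ := 0) (v := 1) p.toNNReal
    have hint := hLp.integrable_norm_rpow (by simp; linarith) ENNReal.coe_ne_top
    simpa [Real.coe_toNNReal p (by linarith)] using hint
  simp_rw [hpow] at hint ⊢
  exact one_le_integral_abs_rpow hsq (by linarith) hint

/-! ### Densities that need not be measurable -/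

section MulLog

variable {r s t : ℝ}

theorem neg_inv_exp_one_le_mul_log (ht : 0 ≤ t) : -(Real.exp 1)⁻¹ ≤ t * Real.log t := by
  rcases ht.eq_or_lt with rfl | ht
  · simpa using (Real.exp_pos 1).le
  · have h := Real.add_one_le_exp (-1 - Real.log t)
    rw [Real.exp_sub, Real.exp_log ht, Real.exp_neg, le_div_iff₀ ht] at h
    linarith

theorem nonneg_of_inv_exp_one_lt_mul_log (h : (Real.exp 1)⁻¹ < t * Real.log t) : 0 ≤ t := by
  by_contra! ht
  have hneg := neg_inv_exp_one_le_mul_log (neg_nonneg.2 ht.le)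
  rw [Real.log_neg_eq_log] at hneg
  linarith

theorem le_of_mul_log_lt_mul_log (hs : 0 ≤ s) (hst : s ≤ t) (hsr : s < r)
    (hs' : s * Real.log s < t * Real.log t) (hr : r * Real.log r < t * Real.log t) : r ≤ t := by
  by_contra! htr
  exact (max_lt hs' hr).not_ge
    (Real.convexOn_mul_log.le_max_of_mem_Icc hs (hs.trans hsr.le) ⟨hst, htr.le⟩)

theorem exists_rat_mul_log_lt_mul_log (hs : 0 ≤ s) (hst : s ≤ t)
    (h : s * Real.log s < t * Real.log t) :
    ∃ r : ℚ, s < r ∧ r * Real.log r < t * Real.log t := by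
  have hlt : s < t := hst.lt_of_ne (by rintro rfl; exact h.false)
  obtain ⟨r, hsr, hrt⟩ := exists_rat_btwn hlt
  refine ⟨r, hsr, ?_⟩
  by_contra! hge
  have hseg : (r : ℝ) ∈ openSegment ℝ s t := by rw [openSegment_eq_Ioo hlt]; exact ⟨hsr, hrt⟩
  exact hge.not_gt (Real.convexOn_mul_log.lt_right_of_left_lt hs (hs.trans hst) hseg
    (h.trans_le hge))

theorem mul_log_div_eq_mul {q : ℝ} (hq : 0 < q) :
    t * Real.log (t / q) = q * (t / q * Real.log (t / q)) := by
  field_simp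

theorem div_le_div_and_mul_log_lt_mul_log {q : ℝ} (hq : 0 < q) (hs : 0 ≤ s) (hst : s ≤ max t 0)
    (h : s * Real.log (s / q) + (Real.exp 1)⁻¹ * (if s = 0 then q else 0) < t * Real.log (t / q)) :
    s / q ≤ t / q ∧ s / q * Real.log (s / q) < t / q * Real.log (t / q) := by
  rw [mul_log_div_eq_mul hq, mul_log_div_eq_mul hq] at h
  rcases hs.eq_or_lt with rfl | hs
  · rw [if_pos rfl, zero_div, zero_mul, mul_zero, zero_add, mul_comm] at h
    have hlt := lt_of_mul_lt_mul_left h hq.le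
    rw [zero_div, zero_mul]
    exact ⟨nonneg_of_inv_exp_one_lt_mul_log hlt, (inv_pos.2 (Real.exp_pos 1)).trans hlt⟩
  · rw [if_neg hs.ne', mul_zero, add_zero] at h
    have hle : s ≤ t := (le_max_iff.1 hst).resolve_right hs.not_ge
    exact ⟨div_le_div_of_nonneg_right hle hq.le, lt_of_mul_lt_mul_left h hq.le⟩

end MulLog

section MeasurableMinorant

variable {S : Type*} [MeasurableSpace S] {ν : Measure S} {f g : S → ℝ}

theorem exists_measurable_nonneg_le_max_setLIntegral_eq
    (hf : ∫⁻ x, ENNReal.ofReal (f x) ∂ν ≠ ∞) :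
    ∃ g : S → ℝ, Measurable g ∧ (∀ x, 0 ≤ g x) ∧ (∀ x, g x ≤ max (f x) 0) ∧
      ∀ A, MeasurableSet A →
        ∫⁻ x in A, ENNReal.ofReal (f x) ∂ν = ∫⁻ x in A, ENNReal.ofReal (g x) ∂ν := by
  obtain ⟨k, hk, hkf, heq⟩ :=
    exists_measurable_le_setLIntegral_eq_of_integrable hf
  have hofReal (x : S) : ENNReal.ofReal (k x).toReal = k x :=
    ENNReal.ofReal_toReal ((hkf x).trans_lt ENNReal.ofReal_lt_top).ne
  refine ⟨fun x => (k x).toReal, hk.ennreal_toReal, fun x => ENNReal.toReal_nonneg,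
    fun x => ENNReal.toReal_le_of_le_ofReal (le_max_right _ _) ?_, fun A hA => ?_⟩
  · exact (hkf x).trans (ENNReal.ofReal_le_ofReal (le_max_left _ _))
  · simp_rw [hofReal]
    exact heq A hA

variable (gm : Measurable g) (g0 : ∀ x, 0 ≤ g x) (gi : Integrable g ν)
  (hfg : ∀ A, MeasurableSet A →
    ∫⁻ x in A, ENNReal.ofReal (f x) ∂ν = ∫⁻ x in A, ENNReal.ofReal (g x) ∂ν)

include gm g0 gi hfg

theorem ae_le_of_setLIntegral_eq {p : S → ℝ} (pm : Measurable p) {A : Set S}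
    (hA : MeasurableSet A) (hp : ∀ x ∈ A, p x ≤ f x) : ∀ᵐ x ∂ν, x ∈ A → p x ≤ g x := by
  have hB : MeasurableSet (A ∩ {x | g x < p x}) := hA.inter (measurableSet_lt gm pm)
  have hnull : ν (A ∩ {x | g x < p x}) = 0 := by
    by_contra hne
    have hlt := setLIntegral_strict_mono hB hne pm.ennreal_ofReal
      ((setLIntegral_le_lintegral _ _).trans_lt gi.lintegral_lt_top).ne
      (Eventually.of_forall fun x hx =>
        (ENNReal.ofReal_lt_ofReal_iff ((g0 x).trans_lt hx.2)).2 hx.2)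
    rw [← hfg _ hB] at hlt
    exact hlt.not_ge (setLIntegral_mono' hB fun x hx => ENNReal.ofReal_le_ofReal (hp x hx.1))
  filter_upwards [measure_eq_zero_iff_ae_notMem.1 hnull] with x hx hxA
  exact not_lt.1 fun hlt => hx ⟨hxA, hlt⟩

/-- The exceptional set is covered by countably many sets on which `r * q ≤ f` for a rational `r`
with `g < r * q`. The indicator term accounts for points where `f` is negative. -/
theorem ae_mul_log_div_le_add_indicator_zeros {q : S → ℝ} (qm : Measurable q) (q0 : ∀ x, 0 < q x)
    (hgf : ∀ x, g x ≤ max (f x) 0)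
    (hf : AEStronglyMeasurable (fun x => f x * Real.log (f x / q x)) ν) :
    ∀ᵐ x ∂ν, f x * Real.log (f x / q x) ≤
      g x * Real.log (g x / q x) + (Real.exp 1)⁻¹ * {x | g x = 0}.indicator q x := by
  set u := fun x => g x * Real.log (g x / q x) + (Real.exp 1)⁻¹ * {x | g x = 0}.indicator q x
    with hu
  have um : Measurable u := (gm.mul (gm.div qm).log).add
    ((qm.indicator (gm (measurableSet_singleton 0))).const_mul _)
  obtain ⟨h, hm, hfh⟩ := hf
  obtain ⟨N, hN, Nm, hN0⟩ := exists_measurable_superset_of_null (ae_iff.1 hfh)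
  have heq {x : S} (hx : x ∉ N) : f x * Real.log (f x / q x) = h x :=
    not_not.1 fun hne => hx (hN hne)
  have hlower {x : S} (hx : x ∉ N) (hux : u x < h x) : 0 ≤ g x / q x ∧ g x / q x ≤ f x / q x ∧
      g x / q x * Real.log (g x / q x) < f x / q x * Real.log (f x / q x) := by
    simp only [← heq hx, hu, indicator_apply, mem_ofPred_eq] at hux
    exact ⟨div_nonneg (g0 x) (q0 x).le,
      div_le_div_and_mul_log_lt_mul_log (q0 x) (g0 x) (hgf x) hux⟩
  have hle (r : ℚ) : ∀ᵐ x ∂ν, x ∈ Nᶜ ∩ {x | u x < h x} ∩ {x | g x / q x < r} ∩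
      {x | q x * (r * Real.log r) < h x} → r * q x ≤ g x := by
    refine ae_le_of_setLIntegral_eq gm g0 gi hfg (qm.const_mul _) ?_ ?_
    · have := hm.measurable
      measurability
    · rintro x ⟨⟨⟨hxN, hux⟩, hgr⟩, hrx⟩
      obtain ⟨hg0, hgf, hlt⟩ := hlower hxN hux
      rw [mem_ofPred_eq, ← heq hxN, mul_log_div_eq_mul (q0 x)] at hrx
      exact (le_div_iff₀ (q0 x)).1 (le_of_mul_log_lt_mul_log hg0 hgf hgr hlt
        (lt_of_mul_lt_mul_left hrx (q0 x).le))
  filter_upwards [ae_all_iff.2 hle, measure_eq_zero_iff_ae_notMem.1 hN0] with x hx hxN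
  rw [heq hxN]
  by_contra! hux
  obtain ⟨hg0, hgf, hlt⟩ := hlower hxN hux
  obtain ⟨r, hgr, hrf⟩ := exists_rat_mul_log_lt_mul_log hg0 hgf hlt
  refine ((div_lt_iff₀ (q0 x)).1 hgr).not_ge (hx r ⟨⟨⟨hxN, hux⟩, hgr⟩, ?_⟩)
  rw [mem_ofPred_eq, ← heq hxN, mul_log_div_eq_mul (q0 x)]
  exact mul_lt_mul_of_pos_left hrf (q0 x)

end MeasurableMinorant

/-! ### Optimisation and constants -/

section Optimisation

variable {X Δ K β : ℝ}

theorem nonpos_of_forall_le_mul_rpow_div (hβ : 0 < β)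
    (hX : ∀ v : ℝ, 0 < v → v ≤ 1 / 13 → X ≤ K * v ^ β / β) : X ≤ 0 := by
  have hlim : Tendsto (fun v : ℝ => K * v ^ β / β) (𝓝[>] 0) (𝓝 0) := by
    have hcont : ContinuousAt (fun v : ℝ => K * v ^ β / β) 0 :=
      ((Real.continuousAt_rpow_const 0 β (Or.inr hβ.le)).const_mul K).div_const β
    simpa only [Real.zero_rpow hβ.ne', mul_zero, zero_div] using
      hcont.tendsto.mono_left nhdsWithin_le_nhds
  refine ge_of_tendsto hlim ?_
  filter_upwards [Ioc_mem_nhdsGT (show (0 : ℝ) < 1 / 13 by norm_num)] with v hv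
  exact hX v hv.1 hv.2

/-- The right-hand side of `hX` is optimised, up to constants, by `K * v ^ β = Δ`. -/
theorem le_of_forall_le_log_mul_add_mul_rpow_div (hβ : 0 < β) (hβ1 : β ≤ 1) (hK : 0 < K)
    (hΔ0 : 0 ≤ Δ) (hΔ1 : Δ ≤ 1)
    (hX : ∀ v : ℝ, 0 < v → v ≤ 1 / 13 →
      X ≤ (41 / 10 + Real.log (1 / v)) * Δ + K * v ^ β / β) :
    X ≤ (Δ * |Real.log Δ| + max 8 (51 / 10 + Real.log K) * Δ) / β := by
  rcases hΔ0.eq_or_lt with rfl | hΔ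
  · simpa using nonpos_of_forall_le_mul_rpow_div hβ (by simpa using hX)
  have hs : 0 < Δ / K := by positivity
  set v := min (1 / 13) ((Δ / K) ^ (1 / β)) with hv
  have hv0 : 0 < v := by positivity
  have hpow : K * v ^ β ≤ Δ := by
    rw [mul_comm, ← le_div_iff₀ hK]
    calc v ^ β ≤ ((Δ / K) ^ (1 / β)) ^ β := by gcongr; exact min_le_right _ _
      _ = Δ / K := by rw [← Real.rpow_mul hs.le, one_div_mul_cancel hβ.ne', Real.rpow_one]
  have hlog : 51 / 10 + β * Real.log (1 / v) ≤
      |Real.log Δ| + max 8 (51 / 10 + Real.log K) := by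
    rcases min_choice (1 / 13) ((Δ / K) ^ (1 / β)) with h | h <;> rw [hv, h]
    · have hlog13 : Real.log (1 / (1 / 13)) ≤ 29 / 10 := by
        have hle := Real.log_le_log (by norm_num) (show (1 / (1 / 13) : ℝ) ≤ 2 ^ 4 by norm_num)
        rw [Real.log_pow] at hle
        push_cast at hle
        linarith [Real.log_two_lt_d9]
      nlinarith [abs_nonneg (Real.log Δ), le_max_left 8 (51 / 10 + Real.log K)]
    · have heq : β * Real.log (1 / (Δ / K) ^ (1 / β)) = Real.log K + |Real.log Δ| := by
        rw [one_div ((Δ / K) ^ (1 / β)), Real.log_inv, Real.log_rpow hs,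
          Real.log_div hΔ.ne' hK.ne', abs_of_nonpos (Real.log_nonpos hΔ.le hΔ1)]
        field_simp
        ring
      linarith [le_max_right 8 (51 / 10 + Real.log K)]
  rw [le_div_iff₀ hβ]
  calc X * β ≤ ((41 / 10 + Real.log (1 / v)) * Δ + K * v ^ β / β) * β := by
        gcongr; exact hX v hv0 (min_le_left _ _)
    _ = (41 / 10 * β + β * Real.log (1 / v)) * Δ + K * v ^ β := by field_simp
    _ ≤ (41 / 10 + β * Real.log (1 / v)) * Δ + Δ := by gcongr; linarith
    _ = (51 / 10 + β * Real.log (1 / v)) * Δ := by ring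
    _ ≤ (|Real.log Δ| + max 8 (51 / 10 + Real.log K)) * Δ := by gcongr
    _ = _ := by ring

end Optimisation

section Constants

variable {κ θ : ℝ} (hκ : 0 < κ)

theorem two_mul_le_two_rpow (hθ : θ ≤ 1) : 2 * θ ≤ 2 ^ θ := by
  have hexp := Real.add_one_le_exp (Real.log 2 * (θ - 1))
  rw [← Real.rpow_def_of_pos two_pos, Real.rpow_sub_one two_ne_zero] at hexp
  nlinarith [Real.log_two_lt_d9]

theorem exp_one_mul_mul_log_le_rpow {b : ℝ} (hb : 0 < b) :
    Real.exp 1 * (θ * Real.log b) ≤ b ^ θ := by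
  have hexp := Real.add_one_le_exp (Real.log b * θ - 1)
  rwa [sub_add_cancel, Real.exp_sub, le_div_iff₀ (Real.exp_pos 1), ← Real.rpow_def_of_pos hb,
    mul_comm (Real.log b), mul_comm] at hexp

include hκ

theorem log_const_mul_le : 51 / 10 + Real.log (233 * κ) ≤ 10.87 * Real.log (2 * κ + 2) := by
  have hpow : 233 * κ ≤ 9.03 * (1 + κ) ^ 10 := by
    have hbern := one_add_mul_le_pow (a := (9 * κ - 1) / 10) (by linarith) 10
    have heq : (1 + (9 * κ - 1) / 10) ^ 10 = (9 / 10) ^ 10 * (1 + κ) ^ 10 := by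
      rw [← mul_pow]
      ring
    have hpos : 0 < (1 + κ) ^ 10 := by positivity
    rw [heq] at hbern
    push_cast at hbern
    nlinarith
  have hlog : Real.log (233 * κ) ≤ Real.log 9.03 + 10 * Real.log (1 + κ) := by
    have hle := Real.log_le_log (by positivity) hpow
    rw [Real.log_mul (x := 9.03) (by norm_num) (by positivity), Real.log_pow] at hle
    exact_mod_cast hle
  have hlog9 : 5 * Real.log 9.03 ≤ 16 * Real.log 2 := by
    have hle := Real.log_le_log (by norm_num) (show (9.03 : ℝ) ^ 5 ≤ 2 ^ 16 by norm_num)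
    rw [Real.log_pow, Real.log_pow] at hle
    exact_mod_cast hle
  have hsplit : Real.log (2 * κ + 2) = Real.log 2 + Real.log (1 + κ) := by
    rw [← Real.log_mul two_ne_zero (by positivity)]
    ring_nf
  have hnonneg : 0 ≤ Real.log (1 + κ) := Real.log_nonneg (by linarith)
  linarith [Real.log_two_gt_d9]

theorem max_mul_le_four_mul_rpow (hθ0 : 0 ≤ θ) (hθ1 : θ ≤ 1) :
    max 8 (51 / 10 + Real.log (233 * κ)) * θ ≤ 4 * (2 * κ + 2) ^ θ := by
  rw [max_mul_of_nonneg _ _ hθ0]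
  refine max_le ?_ ?_
  · have hmono : (2 : ℝ) ^ θ ≤ (2 * κ + 2) ^ θ := by gcongr; linarith
    linarith [two_mul_le_two_rpow hθ1]
  · have hlog : 0 ≤ θ * Real.log (2 * κ + 2) :=
      mul_nonneg hθ0 (Real.log_nonneg (by linarith))
    have hexp := exp_one_mul_mul_log_le_rpow (θ := θ) (show 0 < 2 * κ + 2 by positivity)
    nlinarith [Real.exp_one_gt_d9, log_const_mul_le hκ]

theorem four_mul_rpow_le (hθ1 : θ ≤ 1) {a b : ℝ} (ha : 1 ≤ a) (hb : 1 ≤ b) :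
    4 * (2 * κ + 2) ^ θ ≤ 2 * (4 * κ + 4) ^ θ * a ^ (1 - θ) * (1 + b) ^ (1 - θ) := by
  have hθ : 0 ≤ 1 - θ := by linarith
  calc 4 * (2 * κ + 2) ^ θ = 2 * ((2 : ℝ) ^ θ * 2 ^ (1 - θ)) * (2 * κ + 2) ^ θ := by
        rw [← Real.rpow_add two_pos, add_sub_cancel, Real.rpow_one]
        ring
    _ = 2 * (2 ^ θ * (2 * κ + 2) ^ θ) * 1 * 2 ^ (1 - θ) := by ring
    _ = 2 * (4 * κ + 4) ^ θ * 1 * 2 ^ (1 - θ) := by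
        rw [← Real.mul_rpow two_pos.le (by positivity)]
        ring_nf
    _ ≤ _ := by
        gcongr
        · exact Real.one_le_rpow ha hθ
        · linarith

theorem entropy_bound_le {η a b C Δ β : ℝ} (hη : 0 < η) (ha : 1 ≤ a) (hb : 1 ≤ b) (hβ : 0 < β)
    (hΔ : 0 ≤ Δ)
    (hC : C = 2 * (4 * κ + 4) ^ (η / (η + 1)) * a ^ (1 / (η + 1)) * (1 + b) ^ (1 / (η + 1))) :
    (Δ * |Real.log Δ| + max 8 (51 / 10 + Real.log (233 * κ)) * Δ) / β ≤
      (η + 1) / (β * η) * Δ * |Real.log Δ| + C * (η + 1) / (β * η) * Δ := by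
  have hθ0 : 0 < η / (η + 1) := by positivity
  have hθ1 : η / (η + 1) ≤ 1 := (div_le_one (by positivity)).2 (by linarith)
  have hle : max 8 (51 / 10 + Real.log (233 * κ)) ≤ C * ((η + 1) / η) := by
    have hexp : 1 / (η + 1) = 1 - η / (η + 1) := by field_simp; ring
    rw [← inv_div η, ← div_eq_mul_inv, le_div_iff₀ hθ0, hC, hexp]
    exact (max_mul_le_four_mul_rpow hκ hθ0.le hθ1).trans (four_mul_rpow_le hκ hθ1 ha hb)
  have hone : 1 ≤ (η + 1) / η := (one_le_div hη).2 (by linarith)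
  calc _ ≤ ((η + 1) / η * (Δ * |Real.log Δ|) + C * ((η + 1) / η) * Δ) / β := by
        have hlog : Δ * |Real.log Δ| ≤ (η + 1) / η * (Δ * |Real.log Δ|) :=
          le_mul_of_one_le_left (by positivity) hone
        gcongr
    _ = _ := by field_simp

end Constants

/-! ### The entropic bound -/

section Entropy

variable {Ω : Type*} [MeasurableSpace Ω] {μ : Measure Ω} [IsProbabilityMeasure μ] {F : Ω → ℝ}
  (hFm : Measurable F) {f : ℝ → ℝ}
  (hf : μ.map F = volume.withDensity fun x => ENNReal.ofReal (f x))

include hFm hf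

theorem exists_measurable_density_le : ∃ g : ℝ → ℝ, Measurable g ∧ (∀ x, 0 ≤ g x) ∧
    (∀ x, g x ≤ max (f x) 0) ∧
    (∀ A, MeasurableSet A → ∫⁻ x in A, ENNReal.ofReal (f x) = ∫⁻ x in A, ENNReal.ofReal (g x)) ∧
    μ.map F = volume.withDensity fun x => ENNReal.ofReal (g x) := by
  have hfin : ∫⁻ x, ENNReal.ofReal (f x) ≠ ∞ := by
    have := Measure.isProbabilityMeasure_map (μ := μ) hFm.aemeasurable
    have huniv := measure_ne_top (μ.map F) univ
    rwa [hf, withDensity_apply _ MeasurableSet.univ, Measure.restrict_univ] at huniv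
  obtain ⟨g, gm, g0, hgf, hfg⟩ := exists_measurable_nonneg_le_max_setLIntegral_eq hfin
  refine ⟨g, gm, g0, hgf, hfg, hf.trans (Measure.ext fun A hA => ?_)⟩
  rw [withDensity_apply _ hA, withDensity_apply _ hA, hfg A hA]

variable (hF1 : ∫ ω, F ω ∂μ = 0) (hF2 : ∫ ω, F ω ^ 2 ∂μ = 1) {τ : ℝ → ℝ} (hτm : Measurable τ)
  (hτ : Integrable (fun ω => (1 - τ (F ω)) ^ 2) μ)
  (hstein : ∀ u : ℝ → ℝ, ContDiff ℝ 1 u → HasCompactSupport u →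
    ∫ ω, F ω * u (F ω) ∂μ = ∫ ω, τ (F ω) * deriv u (F ω) ∂μ)

include hF1 hF2 hτm hτ hstein

theorem integral_factor_comp_eq_one : ∫ ω, τ (F ω) ∂μ = 1 := by
  obtain ⟨g, gm, g0, -, -, hg⟩ := exists_measurable_density_le hFm hf
  rw [integral_comp_eq_integral_mul hFm gm g0 hg hτm]
  exact (SteinFactor.of_map_eq hFm gm g0 hg hF1 hF2 hτm hτ hstein).integral_factor_mul

theorem stmt8_general {κ α : ℝ} (hκ : 0 < κ) (hα : 0 < α)
    (htv : ∀ x : ℝ, ∀ t ∈ Ioc (0 : ℝ) 1,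
      tvDist (μ.map fun ω => √t * F ω + √(1 - t) * x) (μ.map F) ≤
        κ * (1 + |x|) * t⁻¹ * (1 - t) ^ α)
    {Δ : ℝ} (hΔdef : Δ = ∫ ω, (1 - τ (F ω)) ^ 2 ∂μ) (hΔ : Δ ≤ 1) :
    ∫ x, f x * Real.log (f x / φ x) ≤
      (Δ * |Real.log Δ| + max 8 (51 / 10 + Real.log (233 * κ)) * Δ) / min 1 (2 * α) := by
  obtain ⟨g, gm, g0, hgf, hfg, hg⟩ := exists_measurable_density_le hFm hf
  have hs : SteinFactor g τ := SteinFactor.of_map_eq hFm gm g0 hg hF1 hF2 hτm hτ hstein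
  obtain rfl : Δ = steinDiscrepancy g τ :=
    hΔdef.trans (integral_comp_eq_integral_mul hFm gm g0 hg (k := fun x => (1 - τ x) ^ 2)
      (by fun_prop))
  have hreg : IsTVRegular (volume.withDensity fun x => ENNReal.ofReal (g x)) κ α := by
    have := Measure.isProbabilityMeasure_map (μ := μ) hFm.aemeasurable
    rw [← hg]
    refine isTVRegular_of_tvDist_map_le fun x t ht => ?_
    rw [Measure.map_map (by fun_prop) hFm]
    exact htv x t ht
  have hβ : 0 < min 1 (2 * α) := by positivity
  have hΔ0 := hs.steinDiscrepancy_nonneg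
  -- The integrand need not be integrable where `f` is negative; the integral is then `0`.
  by_cases hint : Integrable fun x => f x * Real.log (f x / φ x)
  · refine le_of_forall_le_log_mul_add_mul_rpow_div hβ (min_le_left _ _) (by positivity) hΔ0 hΔ
      fun v hv hv1 => ?_
    obtain ⟨hint_g, hle⟩ := hs.integral_mul_log_div_gaussianPDFReal_le hκ.le hα hreg hΔ hv hv1
    have hint_zeros : Integrable fun x => (Real.exp 1)⁻¹ * {x | g x = 0}.indicator φ x :=
      ((integrable_gaussianPDFReal 0 1).indicator (gm (measurableSet_singleton 0))).const_mul _
    have hmono := integral_mono_ae hint (hint_g.add hint_zeros)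
      (ae_mul_log_div_le_add_indicator_zeros gm g0 hs.integrable hfg
        (measurable_gaussianPDFReal 0 1) gaussianPDFReal_zero_one_pos hgf hint.1)
    rw [integral_add' hint_g hint_zeros, integral_const_mul] at hmono
    linarith [hs.integral_gaussianPDFReal_zeros_le]
  · rw [integral_undef hint]
    positivity

end Entropy

/-- Theorem `main1d` of the paper: an entropic bound
`D(F‖Z) ≤ ((η+1)/((1∧2α)η)) Δ |log Δ| + (C_η(η+1)/((1∧2α)η)) Δ` for a centered
unit-variance `F` with density `f`, Stein factor `τ_F` with finite `(2+η)`-moment,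
satisfying the total variation smoothness assumption. -/
theorem stmt8 {Ω : Type*} [MeasureSpace Ω] [IsProbabilityMeasure (ℙ : Measure Ω)]
    (F Z : Ω → ℝ) (hFm : Measurable F) (hZm : Measurable Z)
    (f : ℝ → ℝ) (hf : (ℙ : Measure Ω).map F = volume.withDensity (fun x => ENNReal.ofReal (f x)))
    (hF1 : ∫ ω, F ω ∂ℙ = 0) (hF2 : ∫ ω, (F ω) ^ 2 ∂ℙ = 1)
    (hZ : (ℙ : Measure Ω).map Z = gaussianReal 0 1) (hindep : IndepFun F Z ℙ)
    (τ : ℝ → ℝ) (hτm : Measurable τ)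
    (hstein : ∀ g : ℝ → ℝ, ContDiff ℝ 1 g → HasCompactSupport g →
      ∫ ω, F ω * g (F ω) ∂ℙ = ∫ ω, τ (F ω) * deriv g (F ω) ∂ℙ)
    (κ α η : ℝ) (hκ : 0 < κ) (hα : 0 < α) (hη : 0 < η)
    (hτmom : Integrable (fun ω => |τ (F ω)| ^ (2 + η)) ℙ)
    (htv : ∀ x : ℝ, ∀ t ∈ Set.Ioc (0 : ℝ) 1,
      tvDist ((ℙ : Measure Ω).map (fun ω => Real.sqrt t * F ω + Real.sqrt (1 - t) * x))
          ((ℙ : Measure Ω).map F) ≤ κ * (1 + |x|) * t⁻¹ * (1 - t) ^ α)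
    (Δ : ℝ) (hΔdef : Δ = ∫ ω, (1 - τ (F ω)) ^ 2 ∂ℙ) (hΔ : Δ ≤ 1)
    (Cη : ℝ)
    (hCη : Cη = 2 * (4 * κ + 4) ^ (η / (η + 1)) *
      (∫ ω, |Z ω| ^ (η + 2) ∂ℙ) ^ (1 / (η + 1)) *
      (1 + ∫ ω, |τ (F ω)| ^ (η + 2) ∂ℙ) ^ (1 / (η + 1))) :
    ∫ x, f x * Real.log (f x / gaussianPDFReal 0 1 x) ≤
      ((η + 1) / (min 1 (2 * α) * η)) * Δ * |Real.log Δ| +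
        (Cη * (η + 1) / (min 1 (2 * α) * η)) * Δ := by
  have hτsq := integrable_one_sub_sq_of_integrable_rpow
    (hτm.comp hFm).aestronglyMeasurable (by linarith) hτmom
  have hτ1 := one_le_integral_abs_rpow
    (integral_factor_comp_eq_one hFm hf hF1 hF2 hτm hτsq hstein) (by linarith) hτmom
  have hZ1 : 1 ≤ ∫ ω, |Z ω| ^ (η + 2) ∂ℙ := by
    have hmap := one_le_integral_abs_rpow_gaussianReal (show 2 ≤ η + 2 by linarith)
    rwa [← hZ, integral_map hZm.aemeasurable
      (by fun_prop (disch := positivity))] at hmap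
  rw [add_comm 2 η] at hτ1
  exact (stmt8_general hFm hf hF1 hF2 hτm hτsq hstein hκ hα htv hΔdef hΔ).trans
    (entropy_bound_le hκ hη hZ1 hτ1 (by positivity)
      (hΔdef ▸ integral_nonneg fun ω => sq_nonneg _) hCη)
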